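/- Assume 0 ≤ α < N, p, q > 0, ρ > 0, and that the Dirichlet eigenpair hypothesis holds for (Ω, λ₁, φ). If μ ≤ C_{H,Ω}, (p + q − 1)·|γ_*| = N − α + 2, and q > 1, then the inequality (E): −Δu − μ|x|^{−2}u ≥ (|x|^{−α} * u^p) u^q has no positive solution in C_Ω^ρ. -/

import Mathlib

open MeasureTheory Real Set
open scoped ENNReal NNReal

noncomputable section

/-- Euclidean space `ℝ^N`. -/
abbrev Euc (N : ℕ) := EuclideanSpace ℝ (Fin N)

/-- The Euclidean Laplacian `Δu(x) = ∑ ∂²u/∂xᵢ²(x)`, the trace of the Hessian. -/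
def lap (N : ℕ) (u : Euc N → ℝ) (x : Euc N) : ℝ :=
  ∑ i : Fin N,
    iteratedFDeriv ℝ 2 u x ![EuclideanSpace.single i 1, EuclideanSpace.single i 1]

/-- The open cone `C_Ω^ρ = {x : |x| > ρ, x/|x| ∈ Ω}`. -/
def coneGT (N : ℕ) (ρ : ℝ) (Ω : Set (Euc N)) : Set (Euc N) :=
  {x | ρ < ‖x‖ ∧ ‖x‖⁻¹ • x ∈ Ω}

/-- The full open cone `C_Ω = {x ≠ 0 : x/|x| ∈ Ω}`. -/
def cone (N : ℕ) (Ω : Set (Euc N)) : Set (Euc N) :=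
  {x | x ≠ 0 ∧ ‖x‖⁻¹ • x ∈ Ω}

/-- `Ω` is a nonempty, connected, relatively open subset of the unit sphere `S^{N-1}`. -/
def IsConeDomain (N : ℕ) (Ω : Set (Euc N)) : Prop :=
  Ω ⊆ Metric.sphere (0 : Euc N) 1 ∧ IsConnected Ω ∧
    IsOpen {ω : Metric.sphere (0 : Euc N) 1 | (ω : Euc N) ∈ Ω}

/-- The convolution `(|x|^{-α} * f)(x) = ∫_{C_Ω^ρ} f(y)|x-y|^{-α} dy`, valued in `[0,∞]`. -/
def rieszConv (N : ℕ) (α ρ : ℝ) (Ω : Set (Euc N)) (f : Euc N → ℝ) (x : Euc N) : ℝ≥0∞ :=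
  ∫⁻ y in coneGT N ρ Ω, ENNReal.ofReal (f y * ‖x - y‖ ^ (-α))

/-- Dirichlet eigenpair hypothesis for `(Ω, λ₁, φ)`: `φ` is continuous on the closure of `Ω`,
positive on `Ω`, vanishing on the relative boundary, with maximum `1`, and its 0-homogeneous
extension `Φ(x) = φ(x/|x|)` is `C²` on the open cone and satisfies `ΔΦ = -λ₁|x|⁻²Φ`. -/
structure DirichletEigenpair (N : ℕ) (Ω : Set (Euc N)) (lam1 : ℝ) (φ : Euc N → ℝ) : Prop where
  contOn : ContinuousOn φ (closure Ω)
  pos : ∀ ω ∈ Ω, 0 < φ ω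
  bdryZero : ∀ ω ∈ closure Ω \ Ω, φ ω = 0
  le_one : ∀ ω ∈ closure Ω, φ ω ≤ 1
  max_one : ∃ ω ∈ closure Ω, φ ω = 1
  smoothExt : ContDiffOn ℝ 2 (fun x => φ (‖x‖⁻¹ • x)) (cone N Ω)
  eigen : ∀ x ∈ cone N Ω,
    lap N (fun y => φ (‖y‖⁻¹ • y)) x = -lam1 * ‖x‖ ^ (-(2:ℝ)) * φ (‖x‖⁻¹ • x)

/-- The Hardy constant `C_{H,Ω} = λ₁ + ((N-2)/2)²`. -/
def CHconst (N : ℕ) (lam1 : ℝ) : ℝ := lam1 + (((N : ℝ) - 2) / 2) ^ 2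

/-- The smaller root `γ_*` of `γ(γ + N - 2) = λ₁ - μ`. -/
def gammaStar (N : ℕ) (lam1 μ : ℝ) : ℝ :=
  (-((N : ℝ) - 2) - Real.sqrt (((N : ℝ) - 2) ^ 2 + 4 * (lam1 - μ))) / 2

/-- A positive (classical) solution of `(E) : -Δu - μ|x|⁻²u ≥ (|x|^{-α} * uᵖ) u^q` in `C_Ω^ρ`. -/
def IsPosSolE (N : ℕ) (ρ μ α p q : ℝ) (Ω : Set (Euc N)) (u : Euc N → ℝ) : Prop :=
  ContDiffOn ℝ 2 u (coneGT N ρ Ω) ∧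
  ContinuousOn u (closure (coneGT N ρ Ω)) ∧
  (∀ x ∈ coneGT N ρ Ω, 0 < u x) ∧
  (∀ x ∈ coneGT N ρ Ω, rieszConv N α ρ Ω (fun y => u y ^ p) x < ⊤) ∧
  (∀ x ∈ coneGT N ρ Ω,
    (rieszConv N α ρ Ω (fun y => u y ^ p) x).toReal * u x ^ q ≤
      -lap N u x - μ * ‖x‖ ^ (-(2:ℝ)) * u x)

/-- A positive solution of `(Z) : -Δu - μ|x|⁻²u ≥ (∫_{C_Ω^ρ} uᵖ) u^q` in `C_Ω^ρ`. -/
def IsPosSolZ (N : ℕ) (ρ μ p q : ℝ) (Ω : Set (Euc N)) (u : Euc N → ℝ) : Prop :=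
  ContDiffOn ℝ 2 u (coneGT N ρ Ω) ∧
  ContinuousOn u (closure (coneGT N ρ Ω)) ∧
  (∀ x ∈ coneGT N ρ Ω, 0 < u x) ∧
  (∫⁻ y in coneGT N ρ Ω, ENNReal.ofReal (u y ^ p)) < ⊤ ∧
  (∀ x ∈ coneGT N ρ Ω,
    (∫⁻ y in coneGT N ρ Ω, ENNReal.ofReal (u y ^ p)).toReal * u x ^ q ≤
      -lap N u x - μ * ‖x‖ ^ (-(2:ℝ)) * u x)

/-- A positive solution `(u, v)` of the system `(S)` in `C_Ω^ρ`. -/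
def IsPosSolS (N : ℕ) (ρ μ α p q s : ℝ) (Ω : Set (Euc N)) (u v : Euc N → ℝ) : Prop :=
  ContDiffOn ℝ 2 u (coneGT N ρ Ω) ∧ ContinuousOn u (closure (coneGT N ρ Ω)) ∧
  ContDiffOn ℝ 2 v (coneGT N ρ Ω) ∧ ContinuousOn v (closure (coneGT N ρ Ω)) ∧
  (∀ x ∈ coneGT N ρ Ω, 0 < u x) ∧ (∀ x ∈ coneGT N ρ Ω, 0 < v x) ∧
  (∀ x ∈ coneGT N ρ Ω, rieszConv N α ρ Ω (fun y => v y ^ p) x < ⊤) ∧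
  (∀ x ∈ coneGT N ρ Ω,
    (rieszConv N α ρ Ω (fun y => v y ^ p) x).toReal * v x ^ q ≤
      -lap N u x - μ * ‖x‖ ^ (-(2:ℝ)) * u x) ∧
  (∀ x ∈ coneGT N ρ Ω, u x ^ s ≤ -lap N v x - μ * ‖x‖ ^ (-(2:ℝ)) * v x)

open Filter Topology InnerProductSpace Gradient Laplacian

/-!
Write `n` for the dimension, `γ = γ_*` and `w = ‖x‖^γ Φ`, which solves `-Δw = μ ‖x‖⁻² w`. Were `u`
a solution, then `v = w F(u / w)` with `F(T) = 1 - (1 + T)^(-s)`, `s = min 1 (q - 1)`, would be a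
supersolution of the same type with `v ≤ min u w`: this is where `q > 1` enters. In the variable
`t = log ‖x‖`, integrating `‖x‖^(-γ) v` against `Φ` over the angular directions (and mollifying in
`t`) gives a bounded positive function `m` with `m'' ≤ κ m' - σ`, where `κ = 2 - n - 2γ ≥ 0` and
`σ ≥ 0` is the corresponding mean of the source. Since `Φ` vanishes on the lateral boundary, the
Green identity is only available for convex truncations of `Φ`, and the inequality is obtained in
the limit.

With `σ` replaced by `0` the inequality makes `m` nondecreasing, hence bounded below; so are the
means of `(‖x‖^(-γ) v)^p`, because `‖x‖^(-γ) v ≤ 1`. This bounds the Riesz potential of `u^p` below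
by `c ‖x‖^(n - α + γ p)`, and the critical relation between `p`, `q` and `γ` makes the source at
least `c' (‖x‖^(-γ) v)^q`, whose means are again bounded below. But then `m'' ≤ κ m' - δ` with
`δ > 0`, which no bounded `m ≥ 0` satisfies.
-/

section Laplacian

variable {E : Type*} [NormedAddCommGroup E] [InnerProductSpace ℝ E]
  {f g : E → ℝ} {x : E}

theorem fderiv_fderiv_apply (hf : ContDiffAt ℝ 2 f x) (e a : E) :
    fderiv ℝ (fun y => fderiv ℝ f y e) x a = fderiv ℝ (fderiv ℝ f) x a e := by
  have hf₁ := (hf.fderiv_right (m := 1) (by norm_num)).differentiableAt (by simp)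
  rw [(hf₁.hasFDerivAt.clm_apply (hasFDerivAt_const e x)).fderiv]
  simp

theorem fderiv_fderiv_mul_apply (hf : ContDiffAt ℝ 2 f x) (hg : ContDiffAt ℝ 2 g x) (a b : E) :
    fderiv ℝ (fderiv ℝ (fun y => f y * g y)) x a b =
      f x * fderiv ℝ (fderiv ℝ g) x a b + fderiv ℝ f x a * fderiv ℝ g x b
        + (g x * fderiv ℝ (fderiv ℝ f) x a b + fderiv ℝ g x a * fderiv ℝ f x b) := by
  have hfderiv : fderiv ℝ (fun y => f y * g y) =ᶠ[𝓝 x]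
      fun y => f y • fderiv ℝ g y + g y • fderiv ℝ f y := by
    filter_upwards [hf.eventually (by simp), hg.eventually (by simp)] with y hfy hgy
    exact fderiv_fun_mul (hfy.differentiableAt (by simp)) (hgy.differentiableAt (by simp))
  have hf₁ := (hf.differentiableAt (by simp)).hasFDerivAt
  have hg₁ := (hg.differentiableAt (by simp)).hasFDerivAt
  have hf₂ := ((hf.fderiv_right (m := 1) (by norm_num)).differentiableAt (by simp)).hasFDerivAt
  have hg₂ := ((hg.fderiv_right (m := 1) (by norm_num)).differentiableAt (by simp)).hasFDerivAt
  rw [hfderiv.fderiv_eq, ((hf₁.fun_smul hg₂).fun_add (hg₁.fun_smul hf₂)).fderiv]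
  simp

theorem fderiv_fderiv_comp_apply {F : ℝ → ℝ} (hF : ContDiffAt ℝ 2 F (g x))
    (hg : ContDiffAt ℝ 2 g x) (a b : E) :
    fderiv ℝ (fderiv ℝ (fun y => F (g y))) x a b =
      deriv F (g x) * fderiv ℝ (fderiv ℝ g) x a b
        + deriv (deriv F) (g x) * (fderiv ℝ g x a * fderiv ℝ g x b) := by
  have hfderiv : fderiv ℝ (fun y => F (g y)) =ᶠ[𝓝 x] fun y => deriv F (g y) • fderiv ℝ g y := by
    filter_upwards [hg.continuousAt.eventually (hF.eventually (by simp)),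
      hg.eventually (by simp)] with y hFy hgy
    exact ((hFy.differentiableAt (by simp)).hasDerivAt.comp_hasFDerivAt y
      (hgy.differentiableAt (by simp)).hasFDerivAt).fderiv
  have hg₁ := (hg.differentiableAt (by simp)).hasFDerivAt
  have hg₂ := ((hg.fderiv_right (m := 1) (by norm_num)).differentiableAt (by simp)).hasFDerivAt
  have hF₂ : HasDerivAt (deriv F) (deriv (deriv F) (g x)) (g x) :=
    ((hF.derivWithin (m := 1) (by norm_num)).differentiableAt (by simp)).hasDerivAt
  rw [hfderiv.fderiv_eq, HasFDerivAt.fderiv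
    (show HasFDerivAt (fun y => deriv F (g y) • fderiv ℝ g y) _ x from
      (hF₂.comp_hasFDerivAt x hg₁).smul hg₂)]
  simp [mul_assoc]

theorem gradient_comp [CompleteSpace E] {F : ℝ → ℝ} (hF : DifferentiableAt ℝ F (g x))
    (hg : DifferentiableAt ℝ g x) :
    ∇ (fun y => F (g y)) x = deriv F (g x) • ∇ g x := by
  refine ext_inner_right ℝ fun a => ?_
  rw [inner_gradient_left, real_inner_smul_left, inner_gradient_left]
  exact congr($((hF.hasDerivAt.comp_hasFDerivAt x hg.hasFDerivAt).fderiv) a)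

variable [FiniteDimensional ℝ E]

theorem laplacian_eq_sum_fderiv_fderiv {ι : Type*} [Fintype ι] (b : OrthonormalBasis ι ℝ E)
    (f : E → ℝ) (x : E) : Δ f x = ∑ i, fderiv ℝ (fderiv ℝ f) x (b i) (b i) := by
  simp [laplacian_eq_iteratedFDeriv_orthonormalBasis f b, iteratedFDeriv_two_apply]

theorem sum_fderiv_mul_fderiv {ι : Type*} [Fintype ι] (b : OrthonormalBasis ι ℝ E)
    (f g : E → ℝ) (x : E) :
    ∑ i, fderiv ℝ f x (b i) * fderiv ℝ g x (b i) = ⟪∇ f x, ∇ g x⟫_ℝ := by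
  rw [← b.sum_inner_mul_inner]
  refine Finset.sum_congr rfl fun i _ => ?_
  rw [inner_gradient_left, real_inner_comm, inner_gradient_left]

theorem laplacian_mul (hf : ContDiffAt ℝ 2 f x) (hg : ContDiffAt ℝ 2 g x) :
    Δ (fun y => f y * g y) x = f x * Δ g x + 2 * ⟪∇ f x, ∇ g x⟫_ℝ + g x * Δ f x := by
  let b := stdOrthonormalBasis ℝ E
  simp only [laplacian_eq_sum_fderiv_fderiv b, fderiv_fderiv_mul_apply hf hg,
    ← sum_fderiv_mul_fderiv b, Finset.sum_add_distrib, Finset.mul_sum, mul_comm (fderiv ℝ g x _)]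
  simp only [two_mul, Finset.sum_add_distrib]
  ring

theorem laplacian_comp {F : ℝ → ℝ} (hF : ContDiffAt ℝ 2 F (g x)) (hg : ContDiffAt ℝ 2 g x) :
    Δ (fun y => F (g y)) x =
      deriv F (g x) * Δ g x + deriv (deriv F) (g x) * ‖∇ g x‖ ^ 2 := by
  let b := stdOrthonormalBasis ℝ E
  simp only [laplacian_eq_sum_fderiv_fderiv b, fderiv_fderiv_comp_apply hF hg,
    ← real_inner_self_eq_norm_sq, ← sum_fderiv_mul_fderiv b, Finset.sum_add_distrib,
    Finset.mul_sum]

theorem continuousAt_laplacian (hf : ContDiffAt ℝ 2 f x) : ContinuousAt (Δ f) x := by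
  have hf₂ : ContinuousAt (fderiv ℝ (fderiv ℝ f)) x :=
    ((hf.fderiv_right (m := 1) (by norm_num)).fderiv_right (m := 0) (by norm_num)).continuousAt
  simp only [funext (laplacian_eq_sum_fderiv_fderiv (stdOrthonormalBasis ℝ E) f)]
  fun_prop

/-- Concavity of `F` makes the Hessian term of `Δ (w · F(u / w))` nonpositive. -/
theorem laplacian_mul_comp_div_le {F : ℝ → ℝ} {u w : E → ℝ} (hu : ContDiffAt ℝ 2 u x)
    (hw : ContDiffAt ℝ 2 w x) (hwpos : 0 < w x) (hF : ContDiffAt ℝ 2 F (u x / w x))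
    (hF₂ : deriv (deriv F) (u x / w x) ≤ 0) :
    Δ (fun y => w y * F (u y / w y)) x ≤
      (F (u x / w x) - u x / w x * deriv F (u x / w x)) * Δ w x
        + deriv F (u x / w x) * Δ u x := by
  obtain ⟨T, hT⟩ : ∃ T : E → ℝ, T = fun y => u y / w y := ⟨_, rfl⟩
  have hTx : T x = u x / w x := congrFun hT x
  have hTC : ContDiffAt ℝ 2 T x := hT ▸ hu.div hw hwpos.ne'
  have hΔu : Δ u x = Δ (fun y => w y * T y) x := by
    refine (laplacian_congr_nhds ?_).eq_of_nhds
    filter_upwards [hw.continuousAt.eventually_ne hwpos.ne'] with y hy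
    rw [hT, mul_div_cancel₀ _ hy]
  have hv : (fun y => w y * F (u y / w y)) = fun y => w y * F (T y) := by rw [hT]
  rw [← hTx] at hF hF₂ ⊢
  rw [laplacian_mul hw hTC] at hΔu
  rw [hv, laplacian_mul hw (g := fun y => F (T y)) (hF.comp x hTC), laplacian_comp hF hTC,
    gradient_comp (hF.differentiableAt (by simp)) (hTC.differentiableAt (by simp)),
    real_inner_smul_right, hΔu]
  linarith [mul_nonneg (mul_nonneg hwpos.le (neg_nonneg.2 hF₂)) (sq_nonneg ‖∇ T x‖)]

theorem gradient_log_norm (hx : x ≠ 0) : ∇ (fun y : E => log ‖y‖) x = (‖x‖ ^ 2)⁻¹ • x := by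
  have hnorm : 0 < ‖x‖ := norm_pos_iff.2 hx
  have h := ((hasStrictFDerivAt_norm_sq x).hasFDerivAt.log (pow_pos hnorm 2).ne').const_mul
    (1 / 2 : ℝ)
  have hlog : (fun y : E => log ‖y‖) = fun y => 1 / 2 * log (‖y‖ ^ 2) := by
    funext y; rw [log_pow]; push_cast; ring
  refine ext_inner_right ℝ fun a => ?_
  rw [inner_gradient_left, hlog, h.fderiv]
  simp [real_inner_smul_left]
  ring

theorem laplacian_norm_sq (x : E) :
    Δ (fun y : E => ‖y‖ ^ 2) x = 2 * Module.finrank ℝ E := by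
  let b := stdOrthonormalBasis ℝ E
  have hfderiv : fderiv ℝ (fderiv ℝ fun y : E => ‖y‖ ^ 2) x =
      (2 • innerSL ℝ : E →L[ℝ] E →L[ℝ] ℝ) := by
    rw [fderiv_norm_sq]
    exact (2 • innerSL ℝ : E →L[ℝ] E →L[ℝ] ℝ).fderiv
  have hdiag (i) : fderiv ℝ (fderiv ℝ fun y : E => ‖y‖ ^ 2) x (b i) (b i) = 2 := by
    rw [hfderiv]
    change 2 • ⟪b i, b i⟫_ℝ = 2
    simp
  simp only [laplacian_eq_sum_fderiv_fderiv b, hdiag, Finset.sum_const, Finset.card_univ,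
    Fintype.card_fin, nsmul_eq_mul, mul_comm]

theorem laplacian_log_norm (hx : x ≠ 0) :
    Δ (fun y : E => log ‖y‖) x = (Module.finrank ℝ E - 2) * (‖x‖ ^ 2)⁻¹ := by
  have hsq : ‖x‖ ^ 2 ≠ 0 := pow_ne_zero 2 (norm_ne_zero_iff.2 hx)
  have hlog : (fun y : E => log ‖y‖) = fun y => (1 / 2 * log (‖y‖ ^ 2)) := by
    funext y; rw [log_pow]; push_cast; ring
  have hF₁ : deriv (fun s : ℝ => 1 / 2 * log s) = fun s => 1 / 2 * s⁻¹ := by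
    funext s; simp
  have hF₂ : deriv (deriv fun s : ℝ => 1 / 2 * log s) (‖x‖ ^ 2) = -(1 / 2) * ((‖x‖ ^ 2) ^ 2)⁻¹ := by
    rw [hF₁]; simp
  have hgrad : ∇ (fun y : E => ‖y‖ ^ 2) x = (2 : ℝ) • x := by
    refine ext_inner_right ℝ fun a => ?_
    rw [inner_gradient_left, fderiv_norm_sq]
    simp [real_inner_smul_left]
  rw [hlog, laplacian_comp (F := fun s => 1 / 2 * log s) (g := fun y : E => ‖y‖ ^ 2)
    (contDiffAt_const.mul (contDiffAt_log.2 hsq)) (contDiff_norm_sq ℝ).contDiffAt, hF₂, hF₁,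
    hgrad, laplacian_norm_sq, norm_smul]
  field_simp
  norm_num
  ring

end Laplacian

section Green

theorem integrableOn_of_continuousOn_of_eq_zero {X : Type*} [TopologicalSpace X] [T2Space X]
    [MeasurableSpace X] [OpensMeasurableSpace X] {μ : Measure X} [IsFiniteMeasureOnCompacts μ]
    {U K : Set X} {g : X → ℝ} (hU : MeasurableSet U) (hK : IsCompact K) (hg : ContinuousOn g K)
    (hg₀ : ∀ x ∈ U \ K, g x = 0) : IntegrableOn g U μ :=
  (hg.integrableOn_compact hK).of_forall_sdiff_eq_zero hU hg₀

theorem tsupport_indicator_subset {X : Type*} [TopologicalSpace X] {U K : Set X} {g : X → ℝ}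
    (hK : IsClosed K) (hg₀ : ∀ x ∈ U \ K, g x = 0) : tsupport (U.indicator g) ⊆ K := by
  refine closure_minimal (fun x hx => ?_) hK
  by_contra hxK
  exact hx (indicator_apply_eq_zero.2 fun hxU => hg₀ x ⟨hxU, hxK⟩)

theorem integrable_mul_of_continuousAt_tsupport {X : Type*} [TopologicalSpace X]
    [MeasurableSpace X] [OpensMeasurableSpace X] {μ : Measure X} [IsFiniteMeasureOnCompacts μ]
    {f g : X → ℝ} (hfc : HasCompactSupport f) (hf : ∀ x ∈ tsupport f, ContinuousAt f x)
    (hg : ∀ x ∈ tsupport f, ContinuousAt g x) : Integrable (fun x => f x * g x) μ := by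
  have hsub : tsupport (fun x => f x * g x) ⊆ tsupport f := tsupport_mul_subset_left
  refine Continuous.integrable_of_hasCompactSupport ?_ hfc.mul_right
  exact continuous_of_tsupport fun x hx => (hf x (hsub hx)).mul (hg x (hsub hx))

variable {E : Type*} [NormedAddCommGroup E] [InnerProductSpace ℝ E] [FiniteDimensional ℝ E]
  [MeasurableSpace E] [BorelSpace E] {ψ v : E → ℝ}

theorem integral_mul_fderiv_eq_neg_fderiv_mul (hψc : HasCompactSupport ψ)
    (hψ : ContDiff ℝ 1 ψ) (hv : ∀ x ∈ tsupport ψ, ContDiffAt ℝ 1 v x) (e : E) :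
    ∫ x, ψ x * fderiv ℝ v x e = -∫ x, fderiv ℝ ψ x e * v x := by
  have hψ₁ : Continuous fun x => fderiv ℝ ψ x e :=
    (hψ.continuous_fderiv (by simp)).clm_apply continuous_const
  have hv₁ (x) (hx : x ∈ tsupport ψ) : ContinuousAt (fun y => fderiv ℝ v y e) x :=
    ((hv x hx).fderiv_right (m := 0) (by norm_num)).continuousAt.clm_apply continuousAt_const
  exact integral_mul_fderiv_eq_neg_fderiv_mul_of_integrable
    (integrable_mul_of_continuousAt_tsupport (hψc.fderiv_apply ℝ e)
      (fun x _ => hψ₁.continuousAt)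
      fun x hx => (hv x (tsupport_fderiv_apply_subset ℝ e hx)).continuousAt)
    (integrable_mul_of_continuousAt_tsupport hψc (fun x _ => hψ.continuous.continuousAt) hv₁)
    (integrable_mul_of_continuousAt_tsupport hψc (fun x _ => hψ.continuous.continuousAt)
      fun x hx => (hv x hx).continuousAt)
    (fun x _ => hψ.differentiable (by simp) x)
    fun x hx => (hv x hx).differentiableAt (by simp)

theorem integral_mul_fderiv_fderiv_eq (hψc : HasCompactSupport ψ) (hψ : ContDiff ℝ 2 ψ)
    (hv : ∀ x ∈ tsupport ψ, ContDiffAt ℝ 2 v x) (e : E) :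
    ∫ x, ψ x * fderiv ℝ (fderiv ℝ v) x e e = ∫ x, v x * fderiv ℝ (fderiv ℝ ψ) x e e := by
  have hψ₁ : ContDiff ℝ 1 fun y => fderiv ℝ ψ y e :=
    (hψ.fderiv_right (m := 1) (by norm_num)).clm_apply contDiff_const
  have hv₁ (x) (hx : x ∈ tsupport ψ) : ContDiffAt ℝ 1 (fun y => fderiv ℝ v y e) x :=
    ((hv x hx).fderiv_right (m := 1) (by norm_num)).clm_apply contDiffAt_const
  calc ∫ x, ψ x * fderiv ℝ (fderiv ℝ v) x e e
    _ = ∫ x, ψ x * fderiv ℝ (fun y => fderiv ℝ v y e) x e := by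
      refine integral_congr_ae (.of_forall fun x => ?_)
      by_cases hx : x ∈ tsupport ψ
      · simp only [fderiv_fderiv_apply (hv x hx)]
      · simp only [image_eq_zero_of_notMem_tsupport hx, zero_mul]
    _ = -∫ x, fderiv ℝ ψ x e * fderiv ℝ v x e :=
      integral_mul_fderiv_eq_neg_fderiv_mul hψc (hψ.of_le (by norm_num)) hv₁ e
    _ = ∫ x, fderiv ℝ (fun y => fderiv ℝ ψ y e) x e * v x := by
      rw [integral_mul_fderiv_eq_neg_fderiv_mul (hψc.fderiv_apply ℝ e) hψ₁
        (fun x hx => (hv x (tsupport_fderiv_apply_subset ℝ e hx)).of_le (by norm_num)) e, neg_neg]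
    _ = ∫ x, v x * fderiv ℝ (fderiv ℝ ψ) x e e := by
      simp only [fderiv_fderiv_apply hψ.contDiffAt, mul_comm]

theorem integral_mul_laplacian_eq (hψc : HasCompactSupport ψ) (hψ : ContDiff ℝ 2 ψ)
    (hv : ∀ x ∈ tsupport ψ, ContDiffAt ℝ 2 v x) :
    ∫ x, ψ x * Δ v x = ∫ x, v x * Δ ψ x := by
  let b := stdOrthonormalBasis ℝ E
  have hψ₂ (e : E) : Continuous fun x => fderiv ℝ (fderiv ℝ ψ) x e e :=
    (((hψ.fderiv_right (m := 1) (by norm_num)).continuous_fderiv (by simp)).clm_apply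
      continuous_const).clm_apply continuous_const
  have hv₂ (e x : E) (hx : x ∈ tsupport ψ) :
      ContinuousAt (fun x => fderiv ℝ (fderiv ℝ v) x e e) x :=
    ((((hv x hx).fderiv_right (m := 1) (by norm_num)).fderiv_right (m := 0)
      (by norm_num)).continuousAt.clm_apply continuousAt_const).clm_apply continuousAt_const
  have hψ₂s (e : E) : tsupport (fun x => fderiv ℝ (fderiv ℝ ψ) x e e) ⊆ tsupport ψ :=
    (tsupport_comp_subset (g := fun L : E →L[ℝ] E →L[ℝ] ℝ => L e e) rfl _).trans
      ((tsupport_fderiv_subset ℝ).trans (tsupport_fderiv_subset ℝ))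
  simp only [laplacian_eq_sum_fderiv_fderiv b, Finset.mul_sum]
  rw [integral_finsetSum, integral_finsetSum]
  · exact Finset.sum_congr rfl fun i _ => integral_mul_fderiv_fderiv_eq hψc hψ hv (b i)
  · refine fun i _ => ?_
    simpa only [mul_comm] using integrable_mul_of_continuousAt_tsupport
      (hψc.of_isClosed_subset (isClosed_tsupport _) (hψ₂s (b i)))
      (fun x _ => (hψ₂ (b i)).continuousAt) fun x hx => (hv x (hψ₂s (b i) hx)).continuousAt
  · exact fun i _ => integrable_mul_of_continuousAt_tsupport hψc
      (fun x _ => hψ.continuous.continuousAt) (hv₂ (b i))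

theorem setIntegral_mul_laplacian_eq {U K : Set E} (hU : IsOpen U) (hK : IsCompact K)
    (hKU : K ⊆ U) (hψ : ContDiffOn ℝ 2 ψ U) (hψ₀ : ∀ x ∈ U \ K, ψ x = 0)
    (hv : ContDiffOn ℝ 2 v U) :
    ∫ x in U, ψ x * Δ v x = ∫ x in U, v x * Δ ψ x := by
  have hsupp : tsupport (U.indicator ψ) ⊆ K := tsupport_indicator_subset hK.isClosed hψ₀
  have heq {x} (hx : x ∈ U) : U.indicator ψ =ᶠ[𝓝 x] ψ :=
    eqOn_indicator.eventuallyEq_of_mem (hU.mem_nhds hx)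
  have hψC : ContDiff ℝ 2 (U.indicator ψ) := by
    refine contMDiff_iff_contDiff.1 (contMDiff_of_tsupport fun x hx => ?_)
    have hxU := hKU (hsupp hx)
    exact contMDiffAt_iff_contDiffAt.2
      ((hψ.contDiffAt (hU.mem_nhds hxU)).congr_of_eventuallyEq (heq hxU))
  have hΔ : U.indicator (fun x => v x * Δ ψ x) = fun x => v x * Δ (U.indicator ψ) x := by
    funext x
    by_cases hx : x ∈ U
    · rw [indicator_of_mem hx, (laplacian_congr_nhds (heq hx)).eq_of_nhds]
    · have hzero : U.indicator ψ =ᶠ[𝓝 x] fun _ => (0 : ℝ) :=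
        notMem_tsupport_iff_eventuallyEq.1 fun h => hx (hKU (hsupp h))
      rw [indicator_of_notMem hx, (laplacian_congr_nhds hzero).eq_of_nhds]
      simp
  rw [← integral_indicator hU.measurableSet, ← integral_indicator hU.measurableSet, hΔ,
    ← integral_mul_laplacian_eq (hK.of_isClosed_subset (isClosed_tsupport _) hsupp) hψC
      fun x hx => hv.contDiffAt (hU.mem_nhds (hKU (hsupp hx)))]
  exact integral_congr_ae (.of_forall fun x => indicator_mul_left ..)

theorem integrableOn_mul_laplacian {U K : Set E} (hU : IsOpen U) (hK : IsCompact K)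
    (hKU : K ⊆ U) (hψ : ContDiffOn ℝ 2 ψ U) (hψ₀ : ∀ x ∈ U \ K, ψ x = 0)
    (hv : ContDiffOn ℝ 2 v U) :
    IntegrableOn (fun x => v x * Δ ψ x) U ∧ IntegrableOn (fun x => ψ x * Δ v x) U := by
  have hcont {f : E → ℝ} (hf : ContDiffOn ℝ 2 f U) : ContinuousOn (Δ f) K := fun x hx =>
    (continuousAt_laplacian (hf.contDiffAt (hU.mem_nhds (hKU hx)))).continuousWithinAt
  have hΔ₀ (x) (hx : x ∈ U \ K) : Δ ψ x = 0 := by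
    have hzero : ψ =ᶠ[𝓝 x] fun _ => (0 : ℝ) :=
      Filter.mem_of_superset ((hU.sdiff hK.isClosed).mem_nhds hx) hψ₀
    rw [(laplacian_congr_nhds hzero).eq_of_nhds]
    simp
  exact ⟨integrableOn_of_continuousOn_of_eq_zero hU.measurableSet hK
      ((hv.continuousOn.mono hKU).mul (hcont hψ)) fun x hx => by rw [hΔ₀ x hx, mul_zero],
    integrableOn_of_continuousOn_of_eq_zero hU.measurableSet hK
      ((hψ.continuousOn.mono hKU).mul (hcont hv)) fun x hx => by rw [hψ₀ x hx, zero_mul]⟩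

end Green

section BoundedSupersolution

/-- The profile `F(T) = 1 - (1 + T)^(-s)`: increasing, concave, with `F(0) = 0`. Replacing a
supersolution `u` by `w * F (u / w)` keeps it a supersolution and bounds it by `w`. -/
def saturation (s T : ℝ) : ℝ := 1 - (1 + T) ^ (-s)

variable {s T : ℝ}

theorem hasDerivAt_saturation (hT : 0 < 1 + T) :
    HasDerivAt (saturation s) (s * (1 + T) ^ (-s - 1)) T := by
  have h := (((hasDerivAt_id T).const_add 1).rpow_const (p := -s) (.inl hT.ne')).const_sub 1
  refine h.congr_deriv ?_
  simp

theorem contDiffAt_saturation {n : WithTop ℕ∞} (hT : 0 < 1 + T) :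
    ContDiffAt ℝ n (saturation s) T :=
  contDiffAt_const.sub ((contDiffAt_const.add contDiffAt_id).rpow_const_of_ne hT.ne')

theorem deriv_deriv_saturation (hT : 0 < 1 + T) :
    deriv (deriv (saturation s)) T = -(s * (s + 1) * (1 + T) ^ (-s - 2)) := by
  have hderiv : deriv (saturation s) =ᶠ[𝓝 T] fun t => s * (1 + t) ^ (-s - 1) := by
    have hpos : ∀ᶠ t in 𝓝 T, 0 < 1 + t :=
      (continuousAt_const.add continuousAt_id).eventually (lt_mem_nhds hT)
    filter_upwards [hpos] with t ht using (hasDerivAt_saturation ht).deriv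
  have h := (((hasDerivAt_id T).const_add 1).rpow_const (p := -s - 1) (.inl hT.ne')).const_mul s
  rw [hderiv.deriv_eq]
  refine h.deriv.trans ?_
  simp only [id_eq, show -s - 1 - 1 = -s - 2 by ring]
  ring

theorem saturation_pos (hs : 0 < s) (hT : 0 < T) : 0 < saturation s T :=
  sub_pos.2 (rpow_lt_one_of_one_lt_of_neg (by linarith) (neg_neg_of_pos hs))

theorem saturation_le_one (hT : 0 ≤ 1 + T) : saturation s T ≤ 1 :=
  sub_le_self _ (rpow_nonneg hT _)

theorem saturation_le_div (hs : s ≤ 1) (hT : 0 ≤ T) : saturation s T ≤ T / (1 + T) := by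
  have h : (1 + T) ^ (-1 : ℝ) ≤ (1 + T) ^ (-s) :=
    rpow_le_rpow_of_exponent_le (by linarith) (neg_le_neg hs)
  rw [rpow_neg_one] at h
  calc saturation s T ≤ 1 - (1 + T)⁻¹ := sub_le_sub_left h 1
    _ = T / (1 + T) := by field_simp; ring

theorem mul_deriv_saturation_le (hs : 0 ≤ s) (hT : 0 ≤ T) :
    T * (s * (1 + T) ^ (-s - 1)) ≤ saturation s T := by
  have hpos : 0 < 1 + T := by linarith
  have hbernoulli : 1 + (s + 1) * T ≤ (1 + T) ^ (s + 1) :=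
    one_add_mul_self_le_rpow_one_add (by linarith) (by linarith)
  have hinv : (1 + T) ^ (-s - 1) * (1 + T) ^ (s + 1) = 1 := by
    rw [← rpow_add hpos]; simp
  have hpow : (1 + T) ^ (-s) = (1 + T) ^ (-s - 1) * (1 + T) := by
    rw [← rpow_add_one hpos.ne']; ring_nf
  have := mul_le_mul_of_nonneg_left hbernoulli (rpow_nonneg hpos.le (-s - 1))
  rw [saturation, hpow]
  linarith

variable {E : Type*} [NormedAddCommGroup E] [InnerProductSpace ℝ E] [FiniteDimensional ℝ E]
  {U : Set E} {V A u w : E → ℝ} {q : ℝ} {x : E}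

theorem mul_rpow_le_neg_laplacian_mul_saturation (hu : ContDiffAt ℝ 2 u x)
    (hw : ContDiffAt ℝ 2 w x) (hupos : 0 < u x) (hwpos : 0 < w x) (hA : 0 ≤ A x)
    (hs : 0 < s) (hs₁ : s ≤ 1) (hsq : s + 1 ≤ q) (hwL : 0 ≤ -Δ w x - V x * w x)
    (huL : A x * u x ^ q ≤ -Δ u x - V x * u x) :
    s * (A x * (w x * saturation s (u x / w x)) ^ q) ≤
      -Δ (fun y => w y * saturation s (u y / w y)) x
        - V x * (w x * saturation s (u x / w x)) := by
  obtain ⟨T, hT⟩ : ∃ T, T = u x / w x := ⟨_, rfl⟩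
  have hTpos : 0 < T := hT ▸ div_pos hupos hwpos
  have huT : u x = w x * T := by rw [hT, mul_div_cancel₀ _ hwpos.ne']
  have hT₁ : 0 < 1 + T := by linarith
  have hF₂ : deriv (deriv (saturation s)) T ≤ 0 := by
    rw [deriv_deriv_saturation hT₁, neg_nonpos]; positivity
  have hΔ := laplacian_mul_comp_div_le hu hw hwpos (F := saturation s)
    (by rw [← hT]; exact contDiffAt_saturation hT₁) (by rwa [← hT])
  rw [← hT, (hasDerivAt_saturation hT₁).deriv] at hΔ
  rw [← hT]
  have hle : w x * saturation s T ≤ u x / (1 + T) := by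
    rw [huT, mul_div_assoc]
    exact mul_le_mul_of_nonneg_left (saturation_le_div hs₁ hTpos.le) hwpos.le
  have hF₁ : (1 + T) ^ (-q) ≤ (1 + T) ^ (-s - 1) :=
    rpow_le_rpow_of_exponent_le (by linarith) (by linarith)
  calc s * (A x * (w x * saturation s T) ^ q)
    _ ≤ s * (A x * (u x / (1 + T)) ^ q) := by
      have := (mul_pos hwpos (saturation_pos hs hTpos)).le
      gcongr
      linarith
    _ = s * (1 + T) ^ (-q) * (A x * u x ^ q) := by
      rw [div_rpow hupos.le hT₁.le, rpow_neg hT₁.le]; ring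
    _ ≤ s * (1 + T) ^ (-s - 1) * (-Δ u x - V x * u x) := by gcongr
    _ ≤ s * (1 + T) ^ (-s - 1) * (-Δ u x - V x * u x)
          + (saturation s T - T * (s * (1 + T) ^ (-s - 1))) * (-Δ w x - V x * w x) :=
      le_add_of_nonneg_right
        (mul_nonneg (sub_nonneg.2 (mul_deriv_saturation_le hs.le hTpos.le)) hwL)
    _ ≤ _ := by
      rw [huT]
      linarith

theorem exists_bounded_supersolution (hU : IsOpen U) (hq : 1 < q) (hu : ContDiffOn ℝ 2 u U)
    (hw : ContDiffOn ℝ 2 w U) (hupos : ∀ x ∈ U, 0 < u x) (hwpos : ∀ x ∈ U, 0 < w x)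
    (hA : ∀ x ∈ U, 0 ≤ A x) (hwL : ∀ x ∈ U, 0 ≤ -Δ w x - V x * w x)
    (huL : ∀ x ∈ U, A x * u x ^ q ≤ -Δ u x - V x * u x) :
    ∃ v : E → ℝ, ContDiffOn ℝ 2 v U ∧ (∀ x ∈ U, 0 < v x) ∧ (∀ x ∈ U, v x ≤ w x) ∧
      (∀ x ∈ U, v x ≤ u x) ∧
      ∀ x ∈ U, min 1 (q - 1) * (A x * v x ^ q) ≤ -Δ v x - V x * v x := by
  have hs : 0 < min 1 (q - 1) := lt_min one_pos (by linarith)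
  have hTpos (x) (hx : x ∈ U) : 0 < u x / w x := div_pos (hupos x hx) (hwpos x hx)
  refine ⟨fun x => w x * saturation (min 1 (q - 1)) (u x / w x), fun x hx => ?_,
    fun x hx => mul_pos (hwpos x hx) (saturation_pos hs (hTpos x hx)), fun x hx => ?_,
    fun x hx => ?_, fun x hx => ?_⟩
  · have hT₁ : 0 < 1 + u x / w x := by linarith [hTpos x hx]
    have hT : ContDiffWithinAt ℝ 2 (fun y => u y / w y) U x :=
      (hu x hx).div (hw x hx) (hwpos x hx).ne'
    exact (hw x hx).mul (ContDiffAt.comp_contDiffWithinAt (g := saturation (min 1 (q - 1)))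
      (f := fun y => u y / w y) x (contDiffAt_saturation hT₁) hT)
  · exact mul_le_of_le_one_right (hwpos x hx).le
      (saturation_le_one (by linarith [hTpos x hx]))
  · calc w x * saturation (min 1 (q - 1)) (u x / w x)
      _ ≤ w x * (u x / w x / (1 + u x / w x)) := mul_le_mul_of_nonneg_left
        (saturation_le_div (min_le_left _ _) (hTpos x hx).le) (hwpos x hx).le
      _ ≤ w x * (u x / w x) := mul_le_mul_of_nonneg_left
        (div_le_self (hTpos x hx).le (by linarith [hTpos x hx])) (hwpos x hx).le
      _ = u x := mul_div_cancel₀ _ (hwpos x hx).ne'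
  · exact mul_rpow_le_neg_laplacian_mul_saturation (hu.contDiffAt (hU.mem_nhds hx))
      (hw.contDiffAt (hU.mem_nhds hx)) (hupos x hx) (hwpos x hx) (hA x hx) hs (min_le_left _ _)
      (by linarith [min_le_right 1 (q - 1)]) (hwL x hx) (huL x hx)

end BoundedSupersolution

section ConvexTruncation

theorem hasDerivAt_max_zero_pow (n : ℕ) (x : ℝ) :
    HasDerivAt (fun x : ℝ => max x 0 ^ (n + 2)) ((n + 2) * max x 0 ^ (n + 1)) x := by
  rcases lt_trichotomy x 0 with hx | rfl | hx
  · have hzero : (fun x : ℝ => max x 0 ^ (n + 2)) =ᶠ[𝓝 x] fun _ => 0 := by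
      filter_upwards [Iio_mem_nhds hx] with y hy
      rw [max_eq_right (le_of_lt hy), zero_pow (by omega)]
    refine ((hasDerivAt_const x (0 : ℝ)).congr_of_eventuallyEq hzero).congr_deriv ?_
    simp [max_eq_right hx.le]
  · have hbig : (fun x : ℝ => max x 0 ^ (n + 2)) =O[𝓝 0] fun x => ‖x - 0‖ ^ (n + 2) := by
      refine .of_bound 1 (Eventually.of_forall fun y => ?_)
      rw [sub_zero, one_mul, norm_pow, norm_pow, norm_norm, norm_eq_abs, norm_eq_abs,
        abs_of_nonneg (le_max_right _ _)]
      exact pow_le_pow_left₀ (le_max_right _ _) (max_le (le_abs_self _) (abs_nonneg _)) _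
    exact (hbig.hasFDerivAt (by omega)).hasDerivAt.congr_deriv (by simp)
  · have hpow : (fun x : ℝ => max x 0 ^ (n + 2)) =ᶠ[𝓝 x] fun y => y ^ (n + 2) := by
      filter_upwards [Ioi_mem_nhds hx] with y hy
      rw [max_eq_left (le_of_lt hy)]
    refine ((hasDerivAt_pow (n + 2) x).congr_of_eventuallyEq hpow).congr_deriv ?_
    simp [max_eq_left hx.le]

/-- The function `t ↦ t (1 - ε / t)₊³`, a `C²` convex truncation of the identity of `(0, ∞)` that
vanishes on `(0, ε]` and stays within `3 ε` of the identity. -/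
def convexTruncation (ε t : ℝ) : ℝ := t * max (1 - ε / t) 0 ^ 3

variable {ε t : ℝ}

theorem hasDerivAt_one_sub_div (ε : ℝ) (ht : t ≠ 0) :
    HasDerivAt (fun s => 1 - ε / s) (ε / t ^ 2) t := by
  refine (((hasDerivAt_id t).inv ht).const_mul ε |>.const_sub 1).congr_deriv ?_
  simp; ring

theorem hasDerivAt_convexTruncation (ε : ℝ) (ht : t ≠ 0) :
    HasDerivAt (convexTruncation ε)
      (max (1 - ε / t) 0 ^ 3 + ε / t * (3 * max (1 - ε / t) 0 ^ 2)) t := by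
  have hcube := (hasDerivAt_max_zero_pow 1 _).comp t (hasDerivAt_one_sub_div ε ht)
  refine ((hasDerivAt_id t).mul hcube).congr_deriv ?_
  simp only [id_eq, Function.comp_apply]
  norm_num
  field_simp

theorem hasDerivAt_deriv_convexTruncation (ε : ℝ) (ht : t ≠ 0) :
    HasDerivAt (deriv (convexTruncation ε)) (6 * (ε ^ 2 / t ^ 3) * max (1 - ε / t) 0) t := by
  have hderiv : deriv (convexTruncation ε) =ᶠ[𝓝 t]
      fun s => max (1 - ε / s) 0 ^ 3 + ε / s * (3 * max (1 - ε / s) 0 ^ 2) := by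
    filter_upwards [isOpen_ne.mem_nhds ht] with s hs using (hasDerivAt_convexTruncation ε hs).deriv
  have hcube := (hasDerivAt_max_zero_pow 1 _).comp t (hasDerivAt_one_sub_div ε ht)
  have hsq := ((hasDerivAt_max_zero_pow 0 _).comp t (hasDerivAt_one_sub_div ε ht)).const_mul 3
  have hdiv := ((hasDerivAt_one_sub_div ε ht).const_sub 1).congr_of_eventuallyEq
    (f₁ := fun s => ε / s) (Eventually.of_forall fun s => by ring)
  refine ((hcube.add (hdiv.mul hsq)).congr_of_eventuallyEq hderiv).congr_deriv ?_
  simp only [Function.comp_apply]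
  norm_num
  field_simp
  ring

theorem contDiffAt_convexTruncation (ε : ℝ) (ht : 0 < t) :
    ContDiffAt ℝ 2 (convexTruncation ε) t := by
  refine ContDiffOn.contDiffAt (s := Ioi 0) ?_ (Ioi_mem_nhds ht)
  have hne {s : ℝ} (hs : s ∈ Ioi (0 : ℝ)) : s ≠ 0 := ne_of_gt hs
  rw [show (2 : WithTop ℕ∞) = 1 + 1 by norm_num, contDiffOn_succ_iff_deriv_of_isOpen isOpen_Ioi,
    show (1 : WithTop ℕ∞) = 0 + 1 by norm_num, contDiffOn_succ_iff_deriv_of_isOpen isOpen_Ioi]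
  refine ⟨fun s hs => (hasDerivAt_convexTruncation ε
      (hne hs)).differentiableAt.differentiableWithinAt, by simp, fun s hs =>
    (hasDerivAt_deriv_convexTruncation ε (hne hs)).differentiableAt.differentiableWithinAt,
    by simp, contDiffOn_zero.2 ?_⟩
  have hcont : ContinuousOn (fun s => 6 * (ε ^ 2 / s ^ 3) * max (1 - ε / s) 0) (Ioi 0) := by
    have hsub : ContinuousOn (fun s : ℝ => 1 - ε / s) (Ioi 0) := fun s hs =>
      (hasDerivAt_one_sub_div ε (hne hs)).continuousAt.continuousWithinAt
    have hdiv₃ : ContinuousOn (fun s : ℝ => ε ^ 2 / s ^ 3) (Ioi 0) :=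
      continuousOn_const.div (continuousOn_id.pow 3) fun s hs => pow_ne_zero 3 (hne hs)
    exact (hdiv₃.const_mul 6).mul (hsub.sup continuousOn_const)
  exact hcont.congr fun s hs => (hasDerivAt_deriv_convexTruncation ε (hne hs)).deriv

theorem deriv_deriv_convexTruncation_nonneg (ε : ℝ) (ht : 0 < t) :
    0 ≤ deriv (deriv (convexTruncation ε)) t := by
  rw [(hasDerivAt_deriv_convexTruncation ε ht.ne').deriv]
  positivity

theorem convexTruncation_nonneg (ε : ℝ) (ht : 0 ≤ t) : 0 ≤ convexTruncation ε t := by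
  unfold convexTruncation; positivity

theorem convexTruncation_eq_zero (ht : 0 < t) (htε : t ≤ ε) : convexTruncation ε t = 0 := by
  have : 1 ≤ ε / t := (one_le_div ht).2 htε
  rw [convexTruncation, max_eq_right (by linarith)]
  simp

theorem max_one_sub_div_le_one (hε : 0 ≤ ε) (ht : 0 < t) : max (1 - ε / t) 0 ≤ 1 :=
  max_le (sub_le_self _ (by positivity)) zero_le_one

theorem convexTruncation_le (hε : 0 ≤ ε) (ht : 0 < t) : convexTruncation ε t ≤ t :=
  mul_le_of_le_one_right ht.le
    (pow_le_one₀ (le_max_right _ _) (max_one_sub_div_le_one hε ht))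

theorem sub_le_convexTruncation (ε : ℝ) (ht : 0 < t) :
    t - 3 * ε ≤ convexTruncation ε t := by
  obtain ⟨y, hy⟩ : ∃ y, y = max (1 - ε / t) 0 := ⟨_, rfl⟩
  have hy₀ : 0 ≤ y := hy ▸ le_max_right _ _
  have hbernoulli : 1 + 3 * (y - 1) ≤ y ^ 3 := by
    simpa using one_add_mul_le_pow (a := y - 1) (by linarith) 3
  have hεy : t - ε ≤ t * y := by
    rw [hy]
    calc t - ε = t * (1 - ε / t) := by field_simp
      _ ≤ _ := mul_le_mul_of_nonneg_left (le_max_left _ _) ht.le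
  rw [convexTruncation, ← hy]
  linarith [mul_le_mul_of_nonneg_left hbernoulli ht.le]

theorem abs_convexTruncation_sub_mul_deriv_le (hε : 0 ≤ ε) (ht : 0 < t) :
    |convexTruncation ε t - t * deriv (convexTruncation ε) t| ≤ 3 * ε := by
  have hsq : max (1 - ε / t) 0 ^ 2 ≤ 1 :=
    pow_le_one₀ (le_max_right _ _) (max_one_sub_div_le_one hε ht)
  have heq : convexTruncation ε t - t * deriv (convexTruncation ε) t =
      -(3 * ε * max (1 - ε / t) 0 ^ 2) := by
    rw [(hasDerivAt_convexTruncation ε ht.ne').deriv, convexTruncation]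
    field_simp
    ring
  rw [heq, abs_neg, abs_of_nonneg (by positivity)]
  exact mul_le_of_le_one_right (by positivity) hsq

end ConvexTruncation

section DifferentialInequality

variable {m m' m'' : ℝ → ℝ} {κ T : ℝ}

theorem sub_le_mul_sub_of_hasDerivAt_le {f f' : ℝ → ℝ} {a b C : ℝ}
    (hf : ∀ t, a ≤ t → HasDerivAt f (f' t) t) (hC : ∀ t, a ≤ t → f' t ≤ C) (hab : a ≤ b) :
    f b - f a ≤ C * (b - a) := by
  refine (convex_Ici a).image_sub_le_mul_sub_of_deriv_le
    (fun t ht => (hf t ht).continuousAt.continuousWithinAt) (fun t ht => ?_) (fun t ht => ?_) a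
    self_mem_Ici b hab hab
  · exact (hf t (interior_subset ht)).differentiableAt.differentiableWithinAt
  · exact (hf t (interior_subset ht)).deriv ▸ hC t (interior_subset ht)

theorem le_of_hasDerivAt_le_mul (hκ : 0 ≤ κ) (hm' : ∀ t, T ≤ t → HasDerivAt m' (m'' t) t)
    (hle : ∀ t, T ≤ t → m'' t ≤ κ * m' t) (hneg : m' T ≤ 0) {t : ℝ} (ht : T ≤ t) :
    m' t ≤ m' T := by
  have hexp (t) (ht : T ≤ t) : HasDerivAt (fun t => exp (-κ * (t - T)) * m' t)
      (exp (-κ * (t - T)) * (m'' t - κ * m' t)) t := by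
    refine (((((hasDerivAt_id t).sub_const T).const_mul (-κ)).exp).mul (hm' t ht)).congr_deriv ?_
    simp only [id_eq]
    ring
  have h := sub_le_mul_sub_of_hasDerivAt_le hexp (C := 0) (fun t ht =>
    mul_nonpos_of_nonneg_of_nonpos (exp_nonneg _) (by linarith [hle t ht])) ht
  simp only [zero_mul, sub_self, mul_zero, exp_zero, one_mul] at h
  have hle_one : exp (-κ * (t - T)) ≤ 1 :=
    exp_le_one_iff.2 (by rw [neg_mul, neg_nonpos]; exact mul_nonneg hκ (by linarith))
  have hnonpos : m' t ≤ 0 := le_of_mul_le_mul_left (by linarith) (exp_pos (-κ * (t - T)))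
  linarith [mul_le_mul_of_nonpos_right hle_one hnonpos]

/-- If `m'` were negative at some time it would stay below that value, sending `m` to `-∞`. -/
theorem nonneg_of_hasDerivAt_le_mul (hκ : 0 ≤ κ) (hm : ∀ t, T < t → HasDerivAt m (m' t) t)
    (hm' : ∀ t, T < t → HasDerivAt m' (m'' t) t) (hm₀ : ∀ t, T < t → 0 ≤ m t)
    (hle : ∀ t, T < t → m'' t ≤ κ * m' t) {t : ℝ} (ht : T < t) : 0 ≤ m' t := by
  by_contra! hneg
  have hslope (s) (hs : t ≤ s) : m' s ≤ m' t :=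
    le_of_hasDerivAt_le_mul hκ (fun s hs => hm' s (ht.trans_le hs))
      (fun s hs => hle s (ht.trans_le hs)) hneg.le hs
  have hstep : 0 ≤ (m t + 1) / -m' t := div_nonneg (by linarith [hm₀ t ht]) (by linarith)
  have h := sub_le_mul_sub_of_hasDerivAt_le (fun s hs => hm s (ht.trans_le hs)) hslope
    (le_add_of_nonneg_right hstep)
  have hval : m' t * (t + (m t + 1) / -m' t - t) = -(m t + 1) := by
    have := hneg.ne
    field_simp
    ring
  linarith [hm₀ (t + (m t + 1) / -m' t) (by linarith)]

theorem false_of_hasDerivAt_le_mul_sub {c C : ℝ} (hκ : 0 ≤ κ) (hc : 0 < c)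
    (hm : ∀ t, T < t → HasDerivAt m (m' t) t) (hm' : ∀ t, T < t → HasDerivAt m' (m'' t) t)
    (hm₀ : ∀ t, T < t → 0 ≤ m t) (hmC : ∀ t, T < t → m t ≤ C)
    (hle : ∀ t, T < t → m'' t ≤ κ * m' t - c) : False := by
  have hm'₀ (t) (ht : T < t) : 0 ≤ m' t :=
    nonneg_of_hasDerivAt_le_mul hκ hm hm' hm₀ (fun s hs => by linarith [hle s hs]) ht
  obtain ⟨a, ha⟩ := exists_gt T
  obtain ⟨D, hD⟩ : ∃ D, D = (κ * C + m' a + 1) / c := ⟨_, rfl⟩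
  have hC : 0 ≤ C := (hm₀ a ha).trans (hmC a ha)
  have hD₀ : 0 ≤ D := by have := hm'₀ a ha; rw [hD]; positivity
  have h := sub_le_mul_sub_of_hasDerivAt_le (f := fun t => m' t - κ * m t) (C := -c)
    (fun t ht => (hm' t (ha.trans_le ht)).sub ((hm t (ha.trans_le ht)).const_mul κ))
    (fun t ht => by linarith [hle t (ha.trans_le ht)]) (le_add_of_nonneg_right hD₀)
  have hval : -c * (a + D - a) = -(κ * C + m' a + 1) := by
    rw [hD]; field_simp; ring
  linarith [hm'₀ (a + D) (by linarith), mul_nonneg hκ (hm₀ a ha),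
    mul_le_mul_of_nonneg_left (hmC (a + D) (by linarith)) hκ]

end DifferentialInequality

section SlidingMean

variable {X : Type*} [MeasurableSpace X] {ν : Measure X} {T g : X → ℝ} {k : ℝ → ℝ} {C : ℝ}

/-- The convolution at `t` of the kernel `k` with the image under `T` of the measure `g • ν`. For
`T = log ‖·‖` it is a smoothed spherical mean of `g` over the sphere of radius `exp t`. -/
def slidingMean (ν : Measure X) (T : X → ℝ) (k : ℝ → ℝ) (g : X → ℝ) (t : ℝ) : ℝ :=
  ∫ x, k (t - T x) * g x ∂ν

variable [IsFiniteMeasureOnCompacts (ν.map T)]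

theorem integrable_comp_of_hasCompactSupport (hT : Measurable T) (hk : Continuous k)
    (hks : HasCompactSupport k) : Integrable (fun x => k (T x)) ν :=
  (hk.integrable_of_hasCompactSupport hks).comp_measurable hT

theorem integrable_comp_mul_of_hasCompactSupport (hT : Measurable T) (hk : Continuous k)
    (hks : HasCompactSupport k) (hg : AEStronglyMeasurable g ν) (hgC : ∀ᵐ x ∂ν, ‖g x‖ ≤ C) :
    Integrable (fun x => k (T x) * g x) ν :=
  (integrable_comp_of_hasCompactSupport hT hk hks).mul_bdd hg hgC

theorem hasCompactSupport_comp_const_sub (hks : HasCompactSupport k) (t : ℝ) :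
    HasCompactSupport fun s => k (t - s) :=
  hks.comp_homeomorph (Homeomorph.subLeft t)

theorem integrable_slidingMean (hT : Measurable T) (hk : Continuous k)
    (hks : HasCompactSupport k) (hg : AEStronglyMeasurable g ν) (hgC : ∀ᵐ x ∂ν, ‖g x‖ ≤ C)
    (t : ℝ) : Integrable (fun x => k (t - T x) * g x) ν :=
  integrable_comp_mul_of_hasCompactSupport (k := fun s => k (t - s)) hT (by fun_prop)
    (hasCompactSupport_comp_const_sub hks t) hg hgC

open scoped Pointwise in
theorem hasDerivAt_slidingMean (hT : Measurable T) (hk : ContDiff ℝ 1 k)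
    (hks : HasCompactSupport k) (hg : AEStronglyMeasurable g ν) (hgC : ∀ᵐ x ∂ν, ‖g x‖ ≤ C)
    (t : ℝ) : HasDerivAt (slidingMean ν T k g) (slidingMean ν T (deriv k) g t) t := by
  have hk' : Continuous (deriv k) := hk.continuous_deriv le_rfl
  have hks' : HasCompactSupport (deriv k) := hks.deriv
  obtain ⟨M, hM⟩ := hk'.bounded_above_of_compact_support hks'
  have hK : IsCompact (Metric.closedBall t 1 - tsupport (deriv k)) :=
    sub_eq_add_neg (Metric.closedBall t 1) _ ▸ (isCompact_closedBall t 1).add hks'.isCompact.neg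
  have hbound : Integrable ((T ⁻¹' (Metric.closedBall t 1 - tsupport (deriv k))).indicator
      fun _ => M * C) ν := by
    rw [integrable_indicator_iff (hT hK.measurableSet)]
    refine integrableOn_const ?_
    rw [← Measure.map_apply hT hK.measurableSet]
    exact hK.measure_lt_top.ne
  refine (hasDerivAt_integral_of_dominated_loc_of_deriv_le (Metric.ball_mem_nhds t one_pos)
    (F := fun t x => k (t - T x) * g x) (F' := fun t x => deriv k (t - T x) * g x)
    (Eventually.of_forall fun s =>
      (integrable_slidingMean hT hk.continuous hks hg hgC s).aestronglyMeasurable)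
    (integrable_slidingMean hT hk.continuous hks hg hgC t)
    (integrable_slidingMean hT hk' hks' hg hgC t).aestronglyMeasurable
    ?_ hbound (Eventually.of_forall fun x s _ => ?_)).2
  · filter_upwards [hgC] with x hx s hs
    by_cases hsupp : s - T x ∈ tsupport (deriv k)
    · have hmem : T x ∈ Metric.closedBall t 1 - tsupport (deriv k) :=
        ⟨s, Metric.ball_subset_closedBall hs, s - T x, hsupp, by simp⟩
      rw [indicator_of_mem (by exact hmem), norm_mul]
      exact mul_le_mul (hM _) hx (norm_nonneg _) ((norm_nonneg _).trans (hM 0))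
    · rw [image_eq_zero_of_notMem_tsupport hsupp, zero_mul, norm_zero]
      exact indicator_nonneg (fun _ _ =>
        mul_nonneg ((norm_nonneg _).trans (hM 0)) ((norm_nonneg _).trans hx)) x
  · have hsub : HasDerivAt (fun s => k (s - T x)) (deriv k (s - T x)) s := by
      simpa using ((hk.differentiable one_ne_zero _).hasDerivAt).comp_sub_const s (T x)
    exact hsub.mul_const _

/-- A smooth kernel with `0 ≤ k ≤ 1` whose support is `(-1, 1)`. -/
def unitBump : ContDiffBump (0 : ℝ) := ⟨1 / 2, 1, by norm_num, by norm_num⟩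

theorem unitBump_pos_iff {s : ℝ} : 0 < unitBump s ↔ |s| < 1 := by
  rw [unitBump.nonneg.lt_iff_ne', ← Function.mem_support, unitBump.support_eq]
  simp [unitBump]

theorem contDiff_unitBump {n : ℕ∞} : ContDiff ℝ n unitBump := unitBump.contDiff

end SlidingMean

section LogMeasure

variable {E : Type*} [NormedAddCommGroup E] [InnerProductSpace ℝ E] [FiniteDimensional ℝ E]
  [MeasurableSpace E] [BorelSpace E]

/-- The dilation-invariant measure `‖x‖^(-n) dx`, `n = dim E`. -/
def logMeasure (E : Type*) [NormedAddCommGroup E] [InnerProductSpace ℝ E]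
    [FiniteDimensional ℝ E] [MeasurableSpace E] [BorelSpace E] : Measure E :=
  volume.withDensity fun x => ENNReal.ofReal (‖x‖ ^ (-Module.finrank ℝ E : ℝ))

theorem logMeasure_restrict (U : Set E) : (logMeasure E).restrict U =
    (volume.restrict U).withDensity fun x => ENNReal.ofReal (‖x‖ ^ (-Module.finrank ℝ E : ℝ)) :=
  restrict_withDensity' _ _

theorem rpow_neg_le_exp_of_le_log {r a β : ℝ} (hr : 0 ≤ r) (hβ : 0 ≤ β) (ha : a ≤ log r) :
    r ^ (-β) ≤ exp (-β * a) := by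
  rcases hr.eq_or_lt with rfl | hr
  · rw [log_zero] at ha
    calc (0 : ℝ) ^ (-β) ≤ 1 := zero_rpow_le_one _
      _ ≤ exp (-β * a) := one_le_exp (mul_nonneg_of_nonpos_of_nonpos (by linarith) ha)
  · rw [rpow_def_of_pos hr, exp_le_exp]
    linarith [mul_le_mul_of_nonneg_left ha hβ]

theorem logMeasure_preimage_log_norm_le (a b : ℝ) :
    logMeasure E ((fun x => log ‖x‖) ⁻¹' Icc a b) ≤
      ENNReal.ofReal (exp (Module.finrank ℝ E * (b - a))) * volume (Metric.ball (0 : E) 1) := by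
  obtain ⟨n, hn⟩ : ∃ n, n = Module.finrank ℝ E := ⟨_, rfl⟩
  have hsub : (fun x : E => log ‖x‖) ⁻¹' Icc a b ⊆ Metric.closedBall 0 (exp b) := by
    rintro x ⟨-, hx⟩
    rw [mem_closedBall_zero_iff]
    rcases (norm_nonneg x).eq_or_lt with hx₀ | hx₀
    · exact hx₀ ▸ (exp_pos b).le
    · exact (log_le_iff_le_exp hx₀).1 hx
  have hdens : ∀ x ∈ (fun x : E => log ‖x‖) ⁻¹' Icc a b,
      ENNReal.ofReal (‖x‖ ^ (-n : ℝ)) ≤ ENNReal.ofReal (exp (-n * a)) := by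
    rintro x ⟨hx, -⟩
    exact ENNReal.ofReal_le_ofReal
      (rpow_neg_le_exp_of_le_log (norm_nonneg x) (Nat.cast_nonneg n) hx)
  have hmeas := (measurable_norm (α := E)).log (measurableSet_Icc (a := a) (b := b))
  calc logMeasure E ((fun x => log ‖x‖) ⁻¹' Icc a b)
    _ = ∫⁻ x in (fun x : E => log ‖x‖) ⁻¹' Icc a b, ENNReal.ofReal (‖x‖ ^ (-n : ℝ)) := by
      rw [logMeasure, withDensity_apply _ hmeas, hn]
    _ ≤ ∫⁻ _ in (fun x : E => log ‖x‖) ⁻¹' Icc a b, ENNReal.ofReal (exp (-n * a)) :=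
      setLIntegral_mono' hmeas hdens
    _ ≤ ENNReal.ofReal (exp (-n * a)) * volume (Metric.closedBall (0 : E) (exp b)) := by
      rw [setLIntegral_const]
      gcongr
    _ = _ := by
      rw [Measure.addHaar_closedBall _ _ (exp_nonneg b), ← mul_assoc,
        ← ENNReal.ofReal_mul (exp_nonneg _), ← exp_nat_mul, ← exp_add, ← hn]
      ring_nf

instance isFiniteMeasureOnCompacts_map_logMeasure (U : Set E) :
    IsFiniteMeasureOnCompacts (((logMeasure E).restrict U).map fun x => log ‖x‖) := by
  refine ⟨fun K hK => ?_⟩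
  obtain ⟨R, hR⟩ := hK.isBounded.subset_closedBall 0
  rw [Real.closedBall_eq_Icc] at hR
  calc _ ≤ (((logMeasure E).restrict U).map fun x => log ‖x‖) (Icc (0 - R) (0 + R)) :=
        measure_mono hR
    _ ≤ logMeasure E ((fun x => log ‖x‖) ⁻¹' Icc (0 - R) (0 + R)) := by
        rw [Measure.map_apply measurable_norm.log measurableSet_Icc]
        exact Measure.restrict_apply_le _ _
    _ < ⊤ := (logMeasure_preimage_log_norm_le _ _).trans_lt
        (ENNReal.mul_lt_top ENNReal.ofReal_lt_top measure_ball_lt_top)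

end LogMeasure

section ReverseEstimate

theorem rpow_mul_sub_le_rpow {a b q : ℝ} (ha : 0 ≤ a) (hb : 0 ≤ b) (hb₁ : b ≤ 1) (hq : 0 ≤ q) :
    a ^ q * (b - a) ≤ b ^ q := by
  rcases le_total b a with hba | hab
  · exact (mul_nonpos_of_nonneg_of_nonpos (rpow_nonneg ha q) (by linarith)).trans
      (rpow_nonneg hb q)
  · calc a ^ q * (b - a) ≤ a ^ q := mul_le_of_le_one_right (rpow_nonneg ha q) (by linarith)
      _ ≤ b ^ q := rpow_le_rpow ha hab hq

variable {X : Type*} [MeasurableSpace X] {ν : Measure X} {P Y : X → ℝ} {B c q : ℝ}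

theorem le_integral_mul_rpow (hP : Integrable P ν) (hP₀ : ∀ᵐ x ∂ν, 0 ≤ P x) (hB : 0 < B)
    (hPB : ∫ x, P x ∂ν ≤ B) (hY : AEStronglyMeasurable Y ν) (hY₀ : ∀ᵐ x ∂ν, 0 ≤ Y x)
    (hY₁ : ∀ᵐ x ∂ν, Y x ≤ 1) (hq : 0 ≤ q) (hc : 0 ≤ c) (hcP : c ≤ ∫ x, P x * Y x ∂ν) :
    (c / (2 * B)) ^ q * (c / 2) ≤ ∫ x, P x * Y x ^ q ∂ν := by
  obtain ⟨ε, hε⟩ : ∃ ε, ε = c / (2 * B) := ⟨_, rfl⟩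
  have hε₀ : 0 ≤ ε := hε ▸ by positivity
  have hPY : Integrable (fun x => P x * Y x) ν := by
    refine hP.mul_bdd (c := 1) hY ?_
    filter_upwards [hY₀, hY₁] with x h₀ h₁
    rwa [norm_of_nonneg h₀]
  have hPYq : Integrable (fun x => P x * Y x ^ q) ν := by
    refine hP.mul_bdd (c := 1) (hY.aemeasurable.pow_const q).aestronglyMeasurable ?_
    filter_upwards [hY₀, hY₁] with x h₀ h₁
    rw [norm_of_nonneg (rpow_nonneg h₀ q)]
    exact rpow_le_one h₀ h₁ hq
  have hhalf : ε * ∫ x, P x ∂ν ≤ c / 2 := by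
    calc ε * ∫ x, P x ∂ν ≤ ε * B := mul_le_mul_of_nonneg_left hPB hε₀
      _ = c / 2 := by rw [hε]; field_simp
  calc (c / (2 * B)) ^ q * (c / 2)
    _ ≤ ε ^ q * (∫ x, P x * Y x ∂ν - ε * ∫ x, P x ∂ν) := by
      rw [← hε]
      exact mul_le_mul_of_nonneg_left (by linarith) (rpow_nonneg hε₀ q)
    _ = ∫ x, ε ^ q * (P x * Y x - ε * P x) ∂ν := by
      rw [integral_const_mul, integral_sub hPY (hP.const_mul ε), integral_const_mul]
    _ ≤ ∫ x, P x * Y x ^ q ∂ν := by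
      refine integral_mono_ae ((hPY.sub (hP.const_mul ε)).const_mul _) hPYq ?_
      filter_upwards [hY₀, hY₁, hP₀] with x h₀ h₁ hPx
      calc ε ^ q * (P x * Y x - ε * P x) = P x * (ε ^ q * (Y x - ε)) := by ring
        _ ≤ P x * Y x ^ q :=
          mul_le_mul_of_nonneg_left (rpow_mul_sub_le_rpow hε₀ h₀ h₁ hq) hPx

end ReverseEstimate

section RieszPotential

theorem exp_mul_rpow_le_rpow {r s : ℝ} (hr : 0 < r) (hs : 0 < s) (h : |log r - log s| ≤ 1) (β : ℝ) :
    exp (-|β|) * r ^ β ≤ s ^ β := by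
  rw [rpow_def_of_pos hr, rpow_def_of_pos hs, ← exp_add, exp_le_exp]
  have := (le_abs_self ((log r - log s) * β)).trans_eq (abs_mul _ _)
  linarith [mul_le_mul_of_nonneg_right h (abs_nonneg β)]

variable {E : Type*} [NormedAddCommGroup E] {f g : E → ℝ} {x y : E} {α β : ℝ}

theorem four_mul_norm_rpow_le_norm_sub_rpow (hα : 0 ≤ α) (hx : x ≠ 0) (hy : y ≠ 0) (hyx : y ≠ x)
    (h : |log ‖x‖ - log ‖y‖| ≤ 1) : (4 * ‖x‖) ^ (-α) ≤ ‖x - y‖ ^ (-α) := by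
  have hx₀ : 0 < ‖x‖ := norm_pos_iff.2 hx
  have hy₀ : 0 < ‖y‖ := norm_pos_iff.2 hy
  refine rpow_le_rpow_of_nonpos (norm_sub_pos_iff.2 hyx.symm) ?_ (by linarith)
  have hyle : ‖y‖ ≤ 3 * ‖x‖ := by
    calc ‖y‖ ≤ exp (log ‖x‖ + 1) := (log_le_iff_le_exp hy₀).1 (by linarith [(abs_le.1 h).1])
      _ = exp 1 * ‖x‖ := by rw [exp_add, exp_log hx₀, mul_comm]
      _ ≤ 3 * ‖x‖ := by gcongr; exact exp_one_lt_three.le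
  linarith [norm_sub_le x y]

variable [InnerProductSpace ℝ E]

theorem integrand_le_of_norm_rpow_mul_le (hα : 0 ≤ α) (hx : x ≠ 0) (hy : y ≠ 0) (hyx : y ≠ x)
    (hg : 0 ≤ g y) (hf : ‖y‖ ^ β * g y ≤ f y) :
    4 ^ (-α) * exp (-|Module.finrank ℝ E + β|) * ‖x‖ ^ (Module.finrank ℝ E - α + β) *
        (‖y‖ ^ (-Module.finrank ℝ E : ℝ) * (unitBump (log ‖x‖ - log ‖y‖) * g y)) ≤
      f y * ‖x - y‖ ^ (-α) := by
  obtain ⟨n, hn⟩ : ∃ n : ℝ, n = Module.finrank ℝ E := ⟨_, rfl⟩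
  have hx₀ : 0 < ‖x‖ := norm_pos_iff.2 hx
  have hy₀ : 0 < ‖y‖ := norm_pos_iff.2 hy
  rw [← hn]
  rcases lt_or_ge |log ‖x‖ - log ‖y‖| 1 with h | h
  · calc 4 ^ (-α) * exp (-|n + β|) * ‖x‖ ^ (n - α + β) *
          (‖y‖ ^ (-n) * (unitBump (log ‖x‖ - log ‖y‖) * g y))
      _ ≤ 4 ^ (-α) * exp (-|n + β|) * ‖x‖ ^ (n - α + β) * (‖y‖ ^ (-n) * (1 * g y)) := by
        gcongr
        exact unitBump.le_one
      _ = (exp (-|n + β|) * ‖x‖ ^ (n + β)) * (‖y‖ ^ (-n) * g y) * (4 * ‖x‖) ^ (-α) := by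
        rw [mul_rpow four_pos.le hx₀.le, show n - α + β = n + β + -α by ring, rpow_add hx₀]
        ring
      _ ≤ ‖y‖ ^ (n + β) * (‖y‖ ^ (-n) * g y) * ‖x - y‖ ^ (-α) := by
        have hr := exp_mul_rpow_le_rpow hx₀ hy₀ h.le (n + β)
        have hk := four_mul_norm_rpow_le_norm_sub_rpow hα hx hy hyx h.le
        exact mul_le_mul (mul_le_mul_of_nonneg_right hr (by positivity)) hk (by positivity)
          (by positivity)
      _ = ‖y‖ ^ β * g y * ‖x - y‖ ^ (-α) := by
        rw [← mul_assoc, ← rpow_add hy₀]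
        ring_nf
      _ ≤ f y * ‖x - y‖ ^ (-α) := by gcongr
  · have hzero : unitBump (log ‖x‖ - log ‖y‖) = 0 :=
      le_antisymm (not_lt.1 (mt unitBump_pos_iff.1 h.not_gt)) unitBump.nonneg
    rw [hzero, zero_mul, mul_zero, mul_zero]
    exact mul_nonneg ((mul_nonneg (rpow_nonneg hy₀.le _) hg).trans hf)
      (rpow_nonneg (norm_nonneg _) _)

variable [FiniteDimensional ℝ E] [MeasurableSpace E] [BorelSpace E] {U : Set E}

theorem integral_unitBump_le (U : Set E) (t : ℝ) :
    ∫ x in U, unitBump (t - log ‖x‖) ∂(logMeasure E) ≤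
      (ENNReal.ofReal (exp (Module.finrank ℝ E * 2)) * volume (Metric.ball (0 : E) 1)).toReal := by
  obtain ⟨S, hS⟩ : ∃ S, S = (fun x : E => log ‖x‖) ⁻¹' Icc (t - 1) (t + 1) := ⟨_, rfl⟩
  have hSmeas : MeasurableSet S := hS ▸ measurable_norm.log measurableSet_Icc
  have hind (x : E) : ENNReal.ofReal (unitBump (t - log ‖x‖)) ≤ S.indicator 1 x := by
    by_cases hx : |t - log ‖x‖| < 1
    · have hxS : x ∈ S := by
        rw [hS]
        exact ⟨by linarith [(abs_lt.1 hx).2], by linarith [(abs_lt.1 hx).1]⟩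
      rw [indicator_of_mem hxS]
      exact ENNReal.ofReal_le_one.2 unitBump.le_one
    · rw [ENNReal.ofReal_of_nonpos (not_lt.1 (mt unitBump_pos_iff.1 hx))]
      exact zero_le
  have hbump : Measurable fun x : E => unitBump (t - log ‖x‖) :=
    unitBump.continuous.measurable.comp (measurable_const.sub measurable_norm.log)
  rw [integral_eq_lintegral_of_nonneg_ae (Eventually.of_forall fun x => unitBump.nonneg)
    hbump.aestronglyMeasurable]
  refine ENNReal.toReal_mono (ENNReal.mul_lt_top ENNReal.ofReal_lt_top measure_ball_lt_top).ne ?_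
  calc ∫⁻ x in U, ENNReal.ofReal (unitBump (t - log ‖x‖)) ∂(logMeasure E)
    _ ≤ ∫⁻ x, S.indicator 1 x ∂(logMeasure E) :=
      (setLIntegral_le_lintegral _ _).trans (lintegral_mono hind)
    _ = logMeasure E S := lintegral_indicator_one hSmeas
    _ ≤ _ := by
      rw [hS, show (2 : ℝ) = t + 1 - (t - 1) by ring]
      exact logMeasure_preimage_log_norm_le _ _

theorem exists_integral_unitBump_le (U : Set E) :
    ∃ B > 0, ∀ t, ∫ x in U, unitBump (t - log ‖x‖) ∂(logMeasure E) ≤ B :=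
  ⟨_, ENNReal.toReal_pos
    (mul_ne_zero (by simp [exp_pos]) (Metric.measure_ball_pos _ _ one_pos).ne')
    (ENNReal.mul_lt_top ENNReal.ofReal_lt_top measure_ball_lt_top).ne, integral_unitBump_le U⟩

theorem ofReal_setIntegral_logMeasure (hU : MeasurableSet U) (hg : ∀ x ∈ U, 0 ≤ g x)
    (hgi : IntegrableOn g U (logMeasure E)) :
    ENNReal.ofReal (∫ x in U, g x ∂(logMeasure E)) =
      ∫⁻ x in U, ENNReal.ofReal (‖x‖ ^ (-Module.finrank ℝ E : ℝ) * g x) := by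
  rw [ofReal_integral_eq_lintegral_ofReal hgi ((ae_restrict_iff' hU).2 (Eventually.of_forall hg)),
    logMeasure, restrict_withDensity hU,
    lintegral_withDensity_eq_lintegral_mul_non_measurable _ (by fun_prop)
      (Eventually.of_forall fun _ => ENNReal.ofReal_lt_top)]
  simp only [Pi.mul_apply, ENNReal.ofReal_mul (rpow_nonneg (norm_nonneg _) _)]

/-- Only the annulus `e⁻¹ ‖x‖ ≤ ‖y‖ ≤ e ‖x‖` of the potential is used. -/
theorem ofReal_mul_slidingMean_le_lintegral (hα : 0 ≤ α) (hU : MeasurableSet U) (hx : x ≠ 0)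
    (hg : ∀ y ∈ U, 0 ≤ g y) (hgi : IntegrableOn (fun y => unitBump (log ‖x‖ - log ‖y‖) * g y) U
      (logMeasure E)) (hf : ∀ y ∈ U, ‖y‖ ^ β * g y ≤ f y) :
    ENNReal.ofReal (4 ^ (-α) * exp (-|Module.finrank ℝ E + β|) *
        ‖x‖ ^ (Module.finrank ℝ E - α + β) *
        slidingMean ((logMeasure E).restrict U) (fun y => log ‖y‖) unitBump g (log ‖x‖)) ≤
      ∫⁻ y in U, ENNReal.ofReal (f y * ‖x - y‖ ^ (-α)) := by
  have : Nontrivial E := ⟨x, 0, hx⟩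
  have hne : ∀ᵐ y : E ∂volume.restrict U, y ∉ ({0, x} : Set E) :=
    ae_restrict_of_ae (measure_eq_zero_iff_ae_notMem.1 ((toFinite {0, x}).measure_zero _))
  rw [slidingMean, ENNReal.ofReal_mul (by positivity), ofReal_setIntegral_logMeasure hU
    (fun y hy => mul_nonneg unitBump.nonneg (hg y hy)) hgi, ← lintegral_const_mul' _ _
    ENNReal.ofReal_ne_top]
  refine lintegral_mono_ae ?_
  filter_upwards [hne, ae_restrict_mem hU] with y hy hyU
  rw [mem_insert_iff, mem_singleton_iff, not_or] at hy
  rw [← ENNReal.ofReal_mul (by positivity)]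
  exact ENNReal.ofReal_le_ofReal
    (integrand_le_of_norm_rpow_mul_le hα hx hy.1 hy.2 (hg y hyU) (hf y hyU))

end RieszPotential

section RadialFunctions

theorem hasDerivAt_exp_mul_mul (β : ℝ) {θ : ℝ → ℝ} {θ' s : ℝ} (hθ : HasDerivAt θ θ' s) :
    HasDerivAt (fun s => exp (β * s) * θ s) (exp (β * s) * (β * θ s + θ')) s := by
  refine ((((hasDerivAt_id s).const_mul β).exp).mul hθ).congr_deriv ?_
  simp only [id_eq, mul_one]
  ring

theorem deriv_exp_mul_mul_eventuallyEq (β : ℝ) {θ : ℝ → ℝ} {s : ℝ} (hθ : ContDiffAt ℝ 2 θ s) :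
    deriv (fun s => exp (β * s) * θ s) =ᶠ[𝓝 s]
      fun s => exp (β * s) * (β * θ s + deriv θ s) := by
  filter_upwards [hθ.eventually (by simp)] with r hr
  exact (hasDerivAt_exp_mul_mul β (hr.differentiableAt (by simp)).hasDerivAt).deriv

theorem deriv_deriv_exp_mul_mul (β : ℝ) {θ : ℝ → ℝ} {s : ℝ} (hθ : ContDiffAt ℝ 2 θ s) :
    deriv (deriv fun s => exp (β * s) * θ s) s =
      exp (β * s) * (β ^ 2 * θ s + 2 * β * deriv θ s + deriv (deriv θ) s) := by
  have hθ₁ : HasDerivAt θ (deriv θ s) s := (hθ.differentiableAt (by simp)).hasDerivAt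
  have hθ₂ : HasDerivAt (deriv θ) (deriv (deriv θ) s) s :=
    ((hθ.derivWithin (m := 1) (by norm_num)).differentiableAt (by simp)).hasDerivAt
  rw [(deriv_exp_mul_mul_eventuallyEq β hθ).deriv_eq,
    (hasDerivAt_exp_mul_mul β ((hθ₁.const_mul β).fun_add hθ₂)).deriv]
  ring

theorem norm_rpow_eq_exp {E : Type*} [NormedAddCommGroup E] {x : E} (β : ℝ) (hx : x ≠ 0) :
    ‖x‖ ^ β = exp (β * log ‖x‖) := by
  rw [rpow_def_of_pos (norm_pos_iff.2 hx), mul_comm]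

theorem norm_rpow_mul_comp_log_eventuallyEq {E : Type*} [NormedAddCommGroup E] {x : E} (β : ℝ)
    (θ : ℝ → ℝ) (hx : x ≠ 0) :
    (fun y : E => ‖y‖ ^ β * θ (log ‖y‖)) =ᶠ[𝓝 x]
      fun y => (fun s => exp (β * s) * θ s) (log ‖y‖) := by
  filter_upwards [isOpen_ne.mem_nhds hx] with y hy
  rw [norm_rpow_eq_exp β hy]

variable {E : Type*} [NormedAddCommGroup E] [InnerProductSpace ℝ E] {x : E} {θ : ℝ → ℝ} {β : ℝ}

theorem contDiffAt_log_norm {n : WithTop ℕ∞} (hx : x ≠ 0) :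
    ContDiffAt ℝ n (fun y : E => log ‖y‖) x :=
  (contDiffAt_norm ℝ hx).log (norm_ne_zero_iff.2 hx)

theorem contDiffAt_norm_rpow_mul_comp_log {n : WithTop ℕ∞} (hx : x ≠ 0)
    (hθ : ContDiffAt ℝ n θ (log ‖x‖)) :
    ContDiffAt ℝ n (fun y : E => ‖y‖ ^ β * θ (log ‖y‖)) x :=
  ((contDiffAt_norm ℝ hx).rpow_const_of_ne (norm_ne_zero_iff.2 hx)).mul
    (hθ.comp x (contDiffAt_log_norm hx))

variable [FiniteDimensional ℝ E]

theorem exists_gradient_norm_rpow_mul_comp_log_eq_smul (hx : x ≠ 0)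
    (hθ : ContDiffAt ℝ 1 θ (log ‖x‖)) :
    ∃ c : ℝ, ∇ (fun y : E => ‖y‖ ^ β * θ (log ‖y‖)) x = c • x := by
  refine ⟨deriv (fun s => exp (β * s) * θ s) (log ‖x‖) * (‖x‖ ^ 2)⁻¹, ?_⟩
  have hk : DifferentiableAt ℝ (fun s => exp (β * s) * θ s) (log ‖x‖) := by
    have := hθ.differentiableAt (by simp)
    fun_prop
  rw [(norm_rpow_mul_comp_log_eventuallyEq β θ hx).gradient_eq,
    gradient_comp (g := fun y : E => log ‖y‖) hk
      ((contDiffAt_log_norm (n := 1) hx).differentiableAt (by simp)),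
    gradient_log_norm hx, smul_smul]

theorem laplacian_comp_log_norm {k : ℝ → ℝ} (hx : x ≠ 0) (hk : ContDiffAt ℝ 2 k (log ‖x‖)) :
    Δ (fun y : E => k (log ‖y‖)) x = (‖x‖ ^ 2)⁻¹ *
      (deriv (deriv k) (log ‖x‖) + (Module.finrank ℝ E - 2) * deriv k (log ‖x‖)) := by
  have hnorm : ‖x‖ ≠ 0 := norm_ne_zero_iff.2 hx
  rw [laplacian_comp (g := fun y : E => log ‖y‖) hk (contDiffAt_log_norm hx), laplacian_log_norm hx,
    gradient_log_norm hx, norm_smul, norm_inv, norm_pow, norm_norm]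
  field_simp
  ring

theorem laplacian_norm_rpow_mul_comp_log (hx : x ≠ 0) (hθ : ContDiffAt ℝ 2 θ (log ‖x‖)) :
    Δ (fun y : E => ‖y‖ ^ β * θ (log ‖y‖)) x = ‖x‖ ^ (β - 2) *
      (deriv (deriv θ) (log ‖x‖) + (2 * β + Module.finrank ℝ E - 2) * deriv θ (log ‖x‖)
        + β * (β + Module.finrank ℝ E - 2) * θ (log ‖x‖)) := by
  rw [(laplacian_congr_nhds (norm_rpow_mul_comp_log_eventuallyEq β θ hx)).eq_of_nhds,
    laplacian_comp_log_norm (k := fun s => exp (β * s) * θ s) hx (by fun_prop),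
    deriv_deriv_exp_mul_mul β hθ,
    (deriv_exp_mul_mul_eventuallyEq β hθ).eq_of_nhds, ← norm_rpow_eq_exp β hx,
    rpow_sub (norm_pos_iff.2 hx), rpow_two]
  ring

end RadialFunctions

section AngularEigenfunction

variable {E : Type*} [NormedAddCommGroup E] [InnerProductSpace ℝ E] [FiniteDimensional ℝ E]

/-- `Φ` is a positive `0`-homogeneous solution of `-ΔΦ = lam ‖x‖⁻² Φ` in the part `U` of a cone
outside the ball of radius `ρ`, normalised by `Φ ≤ 1`. Homogeneity enters only through
`inner_gradient_eq_zero`; the vanishing of `Φ` on the lateral boundary is encoded as compactness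
of its superlevel sets in closed annuli. -/
structure IsAngularEigenfunction (U : Set E) (ρ lam : ℝ) (Φ : E → ℝ) : Prop where
  isOpen : IsOpen U
  zero_notMem : 0 ∉ U
  exists_log_norm_eq : ∀ t, log ρ < t → ∃ x ∈ U, log ‖x‖ = t
  contDiffOn : ContDiffOn ℝ 2 Φ U
  pos : ∀ x ∈ U, 0 < Φ x
  le_one : ∀ x ∈ U, Φ x ≤ 1
  inner_gradient_eq_zero : ∀ x ∈ U, ⟪x, ∇ Φ x⟫_ℝ = 0
  laplacian_eq : ∀ x ∈ U, Δ Φ x = -lam * (‖x‖ ^ 2)⁻¹ * Φ x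
  exists_isCompact : ∀ ε > 0, ∀ a b, log ρ < a → ∃ K, IsCompact K ∧ K ⊆ U ∧
    ∀ x ∈ U, ε ≤ Φ x → log ‖x‖ ∈ Icc a b → x ∈ K

namespace IsAngularEigenfunction

variable {U : Set E} {ρ lam : ℝ} {Φ : E → ℝ} {x : E} {θ H : ℝ → ℝ} {β γ μ : ℝ}

theorem ne_zero (hΦ : IsAngularEigenfunction U ρ lam Φ) (hx : x ∈ U) : x ≠ 0 :=
  ne_of_mem_of_not_mem hx hΦ.zero_notMem

theorem contDiffAt (hΦ : IsAngularEigenfunction U ρ lam Φ) (hx : x ∈ U) : ContDiffAt ℝ 2 Φ x :=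
  hΦ.contDiffOn.contDiffAt (hΦ.isOpen.mem_nhds hx)

theorem contDiffAt_norm_rpow_mul_comp_log_mul_comp (hΦ : IsAngularEigenfunction U ρ lam Φ)
    (hx : x ∈ U) (hθ : ContDiffAt ℝ 2 θ (log ‖x‖)) (hH : ContDiffAt ℝ 2 H (Φ x)) :
    ContDiffAt ℝ 2 (fun y => ‖y‖ ^ β * θ (log ‖y‖) * H (Φ y)) x :=
  (contDiffAt_norm_rpow_mul_comp_log (hΦ.ne_zero hx) hθ).mul (hH.comp x (hΦ.contDiffAt hx))

theorem laplacian_norm_rpow_mul_comp_log_mul_comp (hΦ : IsAngularEigenfunction U ρ lam Φ)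
    (hx : x ∈ U) (hθ : ContDiffAt ℝ 2 θ (log ‖x‖)) (hH : ContDiffAt ℝ 2 H (Φ x)) :
    Δ (fun y => ‖y‖ ^ β * θ (log ‖y‖) * H (Φ y)) x = ‖x‖ ^ (β - 2) *
      ((deriv (deriv θ) (log ‖x‖) + (2 * β + Module.finrank ℝ E - 2) * deriv θ (log ‖x‖)
        + β * (β + Module.finrank ℝ E - 2) * θ (log ‖x‖)) * H (Φ x)
        - lam * θ (log ‖x‖) * (Φ x * deriv H (Φ x)))
      + ‖x‖ ^ β * θ (log ‖x‖) * (deriv (deriv H) (Φ x) * ‖∇ Φ x‖ ^ 2) := by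
  have hx₀ := hΦ.ne_zero hx
  obtain ⟨c, hc⟩ := exists_gradient_norm_rpow_mul_comp_log_eq_smul (β := β) hx₀
    (hθ.of_le one_le_two)
  rw [laplacian_mul (g := fun y => H (Φ y)) (contDiffAt_norm_rpow_mul_comp_log hx₀ hθ)
    (hH.comp x (hΦ.contDiffAt hx)), laplacian_norm_rpow_mul_comp_log hx₀ hθ,
    laplacian_comp hH (hΦ.contDiffAt hx), hc, gradient_comp (hH.differentiableAt (by simp))
    ((hΦ.contDiffAt hx).differentiableAt (by simp)), real_inner_smul_left, real_inner_smul_right,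
    hΦ.inner_gradient_eq_zero x hx, hΦ.laplacian_eq x hx, rpow_sub (norm_pos_iff.2 hx₀), rpow_two]
  ring

theorem neg_laplacian_norm_rpow_mul_sub (hΦ : IsAngularEigenfunction U ρ lam Φ)
    (hγ : γ * (γ + Module.finrank ℝ E - 2) = lam - μ) (hx : x ∈ U) :
    -Δ (fun y => ‖y‖ ^ γ * Φ y) x - μ * (‖x‖ ^ 2)⁻¹ * (‖x‖ ^ γ * Φ x) = 0 := by
  have h := hΦ.laplacian_norm_rpow_mul_comp_log_mul_comp (β := γ) (θ := fun _ => 1)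
    (H := fun s => s) hx contDiffAt_const contDiffAt_id
  simp only [mul_one, deriv_const', deriv_id'', deriv_const, hγ] at h
  rw [h, rpow_sub (norm_pos_iff.2 (hΦ.ne_zero hx)), rpow_two]
  ring

end IsAngularEigenfunction

end AngularEigenfunction

section WeakInequality

theorem setIntegral_logMeasure {E : Type*} [NormedAddCommGroup E] [InnerProductSpace ℝ E]
    [FiniteDimensional ℝ E] [MeasurableSpace E] [BorelSpace E] {U : Set E} (hU : MeasurableSet U)
    (g : E → ℝ) : ∫ x in U, g x ∂(logMeasure E) =
      ∫ x in U, ‖x‖ ^ (-Module.finrank ℝ E : ℝ) * g x := by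
  rw [logMeasure, setIntegral_withDensity_eq_setIntegral_toReal_smul (by fun_prop)
    (Eventually.of_forall fun _ => ENNReal.ofReal_lt_top) g hU]
  simp only [ENNReal.toReal_ofReal (rpow_nonneg (norm_nonneg _) _), smul_eq_mul]

theorem integrableOn_logMeasure_iff {E : Type*} [NormedAddCommGroup E] [InnerProductSpace ℝ E]
    [FiniteDimensional ℝ E] [MeasurableSpace E] [BorelSpace E] {U : Set E} {g : E → ℝ} :
    IntegrableOn g U (logMeasure E) ↔
      IntegrableOn (fun x => ‖x‖ ^ (-Module.finrank ℝ E : ℝ) * g x) U := by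
  rw [IntegrableOn, logMeasure_restrict, integrable_withDensity_iff_integrable_smul' (by fun_prop)
    (Eventually.of_forall fun _ => ENNReal.ofReal_lt_top)]
  simp only [ENNReal.toReal_ofReal (rpow_nonneg (norm_nonneg _) _), smul_eq_mul, IntegrableOn]

theorem mul_convexTruncation_add_ge {A X g C lam t s ε : ℝ} (hX : 0 ≤ X) (hX₁ : X ≤ 1)
    (hg : 0 ≤ g) (hgC : g ≤ C) (ht : 0 < t) (hs : 0 ≤ s) (hε : 0 ≤ ε) :
    s * (g * t) + A * (X * t) - 3 * ε * (s * C + |A| + |lam| * s) ≤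
      (s * g + A * X) * convexTruncation ε t +
        lam * s * X * (convexTruncation ε t - t * deriv (convexTruncation ε) t) := by
  obtain ⟨h, hh⟩ : ∃ h, h = convexTruncation ε t := ⟨_, rfl⟩
  obtain ⟨d, hd⟩ : ∃ d, d = h - t * deriv (convexTruncation ε) t := ⟨_, rfl⟩
  have hle : h ≤ t := hh ▸ convexTruncation_le hε ht
  have hge : t - h ≤ 3 * ε := by linarith [hh ▸ sub_le_convexTruncation ε ht]
  have hd' : |d| ≤ 3 * ε := by
    rw [hd, hh]
    exact abs_convexTruncation_sub_mul_deriv_le hε ht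
  have hsource : (s * g + A * X) * (t - h) ≤ (s * C + |A|) * (3 * ε) := by
    have hAX : A * X ≤ |A| :=
      (mul_le_mul_of_nonneg_right (le_abs_self A) hX).trans
        (mul_le_of_le_one_right (abs_nonneg A) hX₁)
    have hsg : s * g ≤ s * C := mul_le_mul_of_nonneg_left hgC hs
    have hC : 0 ≤ s * C := mul_nonneg hs (hg.trans hgC)
    exact mul_le_mul (by linarith) hge (by linarith) (by positivity)
  have hlam : -(lam * s * X * d) ≤ |lam| * s * (3 * ε) := by
    calc -(lam * s * X * d) ≤ |lam * s * X * d| := neg_le_abs _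
      _ = |lam| * s * X * |d| := by
        rw [abs_mul, abs_mul, abs_mul, abs_of_nonneg hs, abs_of_nonneg hX]
      _ ≤ |lam| * s * 1 * (3 * ε) := by gcongr
      _ = |lam| * s * (3 * ε) := by ring
  rw [← hh, ← hd]
  linarith

variable {E : Type*} [NormedAddCommGroup E] [InnerProductSpace ℝ E] [FiniteDimensional ℝ E]

/-- `v` is a positive supersolution of `-Δv - μ ‖x‖⁻² v = ‖x‖^(γ - 2) g` in `U` lying below
`‖x‖^γ`, for a bounded continuous source `g ≥ 0`. The powers of `‖x‖` make the equation
dilation-invariant in the variables `‖x‖^(-γ) v` and `g`. -/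
structure IsScaledSupersolution (U : Set E) (μ γ : ℝ) (v g : E → ℝ) : Prop where
  contDiffOn : ContDiffOn ℝ 2 v U
  pos : ∀ x ∈ U, 0 < v x
  le_rpow : ∀ x ∈ U, v x ≤ ‖x‖ ^ γ
  continuousOn_source : ContinuousOn g U
  source_nonneg : ∀ x ∈ U, 0 ≤ g x
  exists_source_le : ∃ C, ∀ x ∈ U, g x ≤ C
  le_neg_laplacian : ∀ x ∈ U, ‖x‖ ^ (γ - 2) * g x ≤ -Δ v x - μ * (‖x‖ ^ 2)⁻¹ * v x

namespace IsScaledSupersolution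

variable {U : Set E} {μ γ : ℝ} {v g : E → ℝ} {x : E}

theorem rpow_neg_mul_pos (hv : IsScaledSupersolution U μ γ v g) (hx : x ∈ U) (hx₀ : x ≠ 0) :
    0 < ‖x‖ ^ (-γ) * v x :=
  mul_pos (rpow_pos_of_pos (norm_pos_iff.2 hx₀) _) (hv.pos x hx)

theorem rpow_neg_mul_le_one (hv : IsScaledSupersolution U μ γ v g) (hx : x ∈ U) (hx₀ : x ≠ 0) :
    ‖x‖ ^ (-γ) * v x ≤ 1 := by
  have hpos := norm_pos_iff.2 hx₀
  calc ‖x‖ ^ (-γ) * v x ≤ ‖x‖ ^ (-γ) * ‖x‖ ^ γ :=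
        mul_le_mul_of_nonneg_left (hv.le_rpow x hx) (rpow_nonneg hpos.le _)
    _ = 1 := by rw [← rpow_add hpos, neg_add_cancel, rpow_zero]

theorem continuousOn_rpow_neg_mul (hv : IsScaledSupersolution U μ γ v g) (hU : 0 ∉ U) :
    ContinuousOn (fun x => ‖x‖ ^ (-γ) * v x) U :=
  (continuousOn_id.norm.rpow_const fun _ hx =>
    Or.inl (norm_ne_zero_iff.2 (ne_of_mem_of_not_mem hx hU))).mul hv.contDiffOn.continuousOn

end IsScaledSupersolution

/-- The test function `‖y‖^β θ(log ‖y‖) h_ε(Φ y)`, with `h_ε` a convex truncation. -/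
def testFunction (β : ℝ) (θ : ℝ → ℝ) (ε : ℝ) (Φ : E → ℝ) (y : E) : ℝ :=
  ‖y‖ ^ β * θ (log ‖y‖) * convexTruncation ε (Φ y)

variable {U : Set E} {ρ lam μ γ ε C a b : ℝ} {Φ v g : E → ℝ} {θ : ℝ → ℝ} {x : E}

theorem contDiffOn_testFunction (β : ℝ) (hΦ : IsAngularEigenfunction U ρ lam Φ)
    (hθ : ContDiff ℝ 2 θ) : ContDiffOn ℝ 2 (testFunction β θ ε Φ) U := fun _ hx =>
  (hΦ.contDiffAt_norm_rpow_mul_comp_log_mul_comp hx hθ.contDiffAt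
    (contDiffAt_convexTruncation ε (hΦ.pos _ hx))).contDiffWithinAt

theorem le_laplacian_testFunction (hΦ : IsAngularEigenfunction U ρ lam Φ)
    (hγ : γ * (γ + Module.finrank ℝ E - 2) = lam - μ) (hθ : ContDiff ℝ 2 θ)
    (hθ₀ : ∀ s, 0 ≤ θ s) (ε : ℝ) (hx : x ∈ U) {A : ℝ}
    (hA : A = deriv (deriv θ) (log ‖x‖) +
      (2 - Module.finrank ℝ E - 2 * γ) * deriv θ (log ‖x‖)) :
    ‖x‖ ^ (2 - Module.finrank ℝ E - γ - 2) *
        ((A + (lam - μ) * θ (log ‖x‖)) * convexTruncation ε (Φ x) -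
          lam * θ (log ‖x‖) * (Φ x * deriv (convexTruncation ε) (Φ x))) ≤
      Δ (testFunction (2 - Module.finrank ℝ E - γ) θ ε Φ) x := by
  have hconvex : 0 ≤ ‖x‖ ^ (2 - Module.finrank ℝ E - γ) * θ (log ‖x‖) *
      (deriv (deriv (convexTruncation ε)) (Φ x) * ‖∇ Φ x‖ ^ 2) :=
    mul_nonneg (mul_nonneg (rpow_nonneg (norm_nonneg _) _) (hθ₀ _)) (mul_nonneg
      (deriv_deriv_convexTruncation_nonneg ε (hΦ.pos x hx)) (by positivity))
  refine (le_add_of_nonneg_right hconvex).trans_eq ?_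
  simp only [funext_iff.2 fun y => show testFunction (2 - Module.finrank ℝ E - γ) θ ε Φ y =
    ‖y‖ ^ (2 - Module.finrank ℝ E - γ) * θ (log ‖y‖) * convexTruncation ε (Φ y) from rfl]
  rw [hΦ.laplacian_norm_rpow_mul_comp_log_mul_comp hx hθ.contDiffAt
    (contDiffAt_convexTruncation ε (hΦ.pos x hx)), ← hγ, hA]
  ring

/-- For `β = 2 - n - γ` the terms with `μ` cancel. -/
theorem le_mul_laplacian_testFunction_sub (hΦ : IsAngularEigenfunction U ρ lam Φ)
    (hv : IsScaledSupersolution U μ γ v g) (hγ : γ * (γ + Module.finrank ℝ E - 2) = lam - μ)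
    (hθ : ContDiff ℝ 2 θ) (hθ₀ : ∀ s, 0 ≤ θ s) (hε : 0 ≤ ε) (hC : ∀ x ∈ U, g x ≤ C) (hx : x ∈ U)
    {A : ℝ} (hA : A = deriv (deriv θ) (log ‖x‖) +
      (2 - Module.finrank ℝ E - 2 * γ) * deriv θ (log ‖x‖)) :
    ‖x‖ ^ (-Module.finrank ℝ E : ℝ) *
        (θ (log ‖x‖) * (g x * Φ x) + A * (‖x‖ ^ (-γ) * v x * Φ x) -
          3 * ε * (θ (log ‖x‖) * C + |A| + |lam| * θ (log ‖x‖))) ≤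
      v x * Δ (testFunction (2 - Module.finrank ℝ E - γ) θ ε Φ) x -
        testFunction (2 - Module.finrank ℝ E - γ) θ ε Φ x * Δ v x := by
  have hx₀ : 0 < ‖x‖ := norm_pos_iff.2 (hΦ.ne_zero hx)
  have hX₀ := hv.rpow_neg_mul_pos hx (hΦ.ne_zero hx)
  have hX₁ := hv.rpow_neg_mul_le_one hx (hΦ.ne_zero hx)
  have hΔ := mul_le_mul_of_nonneg_left (le_laplacian_testFunction hΦ hγ hθ hθ₀ ε hx hA)
    (hv.pos x hx).le
  have hh₀ := convexTruncation_nonneg ε (hΦ.pos x hx).le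
  have hscalar := mul_convexTruncation_add_ge (A := A) (lam := lam) hX₀.le hX₁
    (hv.source_nonneg x hx) (hC x hx) (hΦ.pos x hx) (hθ₀ (log ‖x‖)) hε
  have hsuper := mul_le_mul_of_nonneg_left (hv.le_neg_laplacian x hx)
    (mul_nonneg (mul_nonneg (rpow_nonneg hx₀.le (2 - Module.finrank ℝ E - γ)) (hθ₀ (log ‖x‖))) hh₀)
  unfold testFunction at hΔ ⊢
  generalize (Module.finrank ℝ E : ℝ) = n at *
  generalize θ (log ‖x‖) = s at *
  generalize convexTruncation ε (Φ x) = h at *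
  generalize deriv (convexTruncation ε) (Φ x) = h' at *
  obtain ⟨X, hX⟩ : ∃ X, X = ‖x‖ ^ (-γ) * v x := ⟨_, rfl⟩
  have hvX : v x = ‖x‖ ^ γ * X := by rw [hX, ← mul_assoc, ← rpow_add hx₀]; simp
  have hpow : ‖x‖ ^ (-n) = ‖x‖ ^ (2 - n - γ - 2) * ‖x‖ ^ γ := by
    rw [← rpow_add hx₀]; ring_nf
  have hpow₂ (p : ℝ) : ‖x‖ ^ (p - 2) = ‖x‖ ^ p * (‖x‖ ^ 2)⁻¹ := by
    rw [rpow_sub hx₀, rpow_two]; rfl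
  rw [← hX] at hscalar ⊢
  calc ‖x‖ ^ (-n) * _
    _ ≤ ‖x‖ ^ (-n) * ((s * g x + A * X) * h + lam * s * X * (h - Φ x * h')) :=
      mul_le_mul_of_nonneg_left hscalar (rpow_nonneg hx₀.le _)
    _ = v x * (‖x‖ ^ (2 - n - γ - 2) * ((A + (lam - μ) * s) * h - lam * s * (Φ x * h'))) +
        ‖x‖ ^ (2 - n - γ) * s * h * (‖x‖ ^ (γ - 2) * g x + μ * (‖x‖ ^ 2)⁻¹ * v x) := by
      rw [hpow, hpow₂, hpow₂, hvX]
      ring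
    _ ≤ _ := by linarith

/-- The operator `θ ↦ θ'' + κ θ'` that `‖x‖^(2 - β) Δ (‖x‖^β θ(log ‖x‖))` reduces to, up to a
zeroth order term. -/
def radialOperator (κ : ℝ) (θ : ℝ → ℝ) (s : ℝ) : ℝ := deriv (deriv θ) s + κ * deriv θ s

theorem continuous_radialOperator (κ : ℝ) (hθ : ContDiff ℝ 2 θ) :
    Continuous (radialOperator κ θ) :=
  (hθ.deriv'.continuous_deriv_one).add ((hθ.continuous_deriv one_le_two).const_mul κ)

theorem hasCompactSupport_radialOperator (κ : ℝ) (hθ : HasCompactSupport θ) :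
    HasCompactSupport (radialOperator κ θ) :=
  hθ.deriv.deriv.add hθ.deriv.mul_left

variable [MeasurableSpace E] [BorelSpace E]

theorem integrable_comp_log_norm_mul {k : ℝ → ℝ} {f : E → ℝ} (hU : MeasurableSet U)
    (hk : Continuous k) (hks : HasCompactSupport k) (hf : ContinuousOn f U)
    (hf₀ : ∀ x ∈ U, 0 ≤ f x) (hfC : ∀ x ∈ U, f x ≤ C) :
    IntegrableOn (fun x => k (log ‖x‖) * f x) U (logMeasure E) := by
  refine integrable_comp_mul_of_hasCompactSupport (C := C) measurable_norm.log hk hks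
    (hf.aestronglyMeasurable hU) ?_
  filter_upwards [ae_restrict_mem hU] with x hx
  rw [norm_of_nonneg (hf₀ x hx)]
  exact hfC x hx

theorem setIntegral_mul_laplacian_testFunction_sub_eq_zero (β : ℝ)
    (hΦ : IsAngularEigenfunction U ρ lam Φ) (hv : ContDiffOn ℝ 2 v U) (hθ : ContDiff ℝ 2 θ)
    (hθs : tsupport θ ⊆ Icc a b) (ha : log ρ < a) (hε : 0 < ε) :
    IntegrableOn (fun x => v x * Δ (testFunction β θ ε Φ) x - testFunction β θ ε Φ x * Δ v x) U ∧
      ∫ x in U, (v x * Δ (testFunction β θ ε Φ) x - testFunction β θ ε Φ x * Δ v x) = 0 := by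
  obtain ⟨K, hK, hKU, hKmem⟩ := hΦ.exists_isCompact ε hε a b ha
  have hψ := contDiffOn_testFunction (ε := ε) β hΦ hθ
  have hψ₀ (x) (hx : x ∈ U \ K) : testFunction β θ ε Φ x = 0 := by
    rw [testFunction]
    rcases le_total (Φ x) ε with hle | hge
    · rw [convexTruncation_eq_zero (hΦ.pos x hx.1) hle, mul_zero]
    · rw [image_eq_zero_of_notMem_tsupport fun h => hx.2 (hKmem x hx.1 hge (hθs h)), mul_zero,
        zero_mul]
  obtain ⟨hvψ, hψv⟩ := integrableOn_mul_laplacian hΦ.isOpen hK hKU hψ hψ₀ hv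
  refine ⟨hvψ.sub hψv, ?_⟩
  rw [integral_sub hvψ hψv, setIntegral_mul_laplacian_eq hΦ.isOpen hK hKU hψ hψ₀ hv, sub_self]

theorem setIntegral_le_mul_setIntegral (hΦ : IsAngularEigenfunction U ρ lam Φ)
    (hv : IsScaledSupersolution U μ γ v g) (hγ : γ * (γ + Module.finrank ℝ E - 2) = lam - μ)
    (hθ : ContDiff ℝ 2 θ) (hθ₀ : ∀ s, 0 ≤ θ s) (hθs : tsupport θ ⊆ Icc a b) (ha : log ρ < a)
    (hC : ∀ x ∈ U, g x ≤ C) (hε : 0 < ε) {A : ℝ → ℝ}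
    (hA : A = radialOperator (2 - Module.finrank ℝ E - 2 * γ) θ)
    (hF : IntegrableOn (fun x => θ (log ‖x‖) * (g x * Φ x) +
      A (log ‖x‖) * (‖x‖ ^ (-γ) * v x * Φ x)) U (logMeasure E)) :
    ∫ x in U, (θ (log ‖x‖) * (g x * Φ x) + A (log ‖x‖) * (‖x‖ ^ (-γ) * v x * Φ x))
        ∂(logMeasure E) ≤
      3 * ε * ∫ x in U, (θ (log ‖x‖) * C + |A (log ‖x‖)| + |lam| * θ (log ‖x‖))
        ∂(logMeasure E) := by
  have hUm := hΦ.isOpen.measurableSet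
  have hθc : HasCompactSupport θ := isCompact_Icc.of_isClosed_subset (isClosed_tsupport θ) hθs
  have hAc : Continuous A := hA ▸ continuous_radialOperator _ hθ
  have hAs : HasCompactSupport A := hA ▸ hasCompactSupport_radialOperator _ hθc
  have hB : IntegrableOn (fun x => θ (log ‖x‖) * C + |A (log ‖x‖)| + |lam| * θ (log ‖x‖)) U
      (logMeasure E) :=
    integrable_comp_of_hasCompactSupport (k := fun s => θ s * C + |A s| + |lam| * θ s)
      measurable_norm.log (by fun_prop)
      ((hθc.mul_right.add hAs.norm).add hθc.mul_left)
  obtain ⟨hint, hzero⟩ := setIntegral_mul_laplacian_testFunction_sub_eq_zero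
    (2 - Module.finrank ℝ E - γ) hΦ hv.contDiffOn hθ hθs ha hε
  rw [← sub_nonpos, ← integral_const_mul, ← integral_sub hF (hB.const_mul _),
    setIntegral_logMeasure hUm, ← hzero]
  exact setIntegral_mono_on (integrableOn_logMeasure_iff.1 (hF.sub (hB.const_mul _))) hint hUm
    fun x hx => le_mul_laplacian_testFunction_sub hΦ hv hγ hθ hθ₀ hε.le hC hx
      (congrFun hA (log ‖x‖))

theorem setIntegral_source_add_nonpos (hΦ : IsAngularEigenfunction U ρ lam Φ)
    (hv : IsScaledSupersolution U μ γ v g) (hγ : γ * (γ + Module.finrank ℝ E - 2) = lam - μ)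
    (hθ : ContDiff ℝ 2 θ) (hθ₀ : ∀ s, 0 ≤ θ s) (hθs : tsupport θ ⊆ Icc a b) (ha : log ρ < a) :
    ∫ x in U, θ (log ‖x‖) * (g x * Φ x) ∂(logMeasure E) +
      ∫ x in U, radialOperator (2 - Module.finrank ℝ E - 2 * γ) θ (log ‖x‖) *
        (‖x‖ ^ (-γ) * v x * Φ x) ∂(logMeasure E) ≤ 0 := by
  obtain ⟨C, hC⟩ := hv.exists_source_le
  have hUm := hΦ.isOpen.measurableSet
  have hθc : HasCompactSupport θ := isCompact_Icc.of_isClosed_subset (isClosed_tsupport θ) hθs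
  have hsource : IntegrableOn (fun x => θ (log ‖x‖) * (g x * Φ x)) U (logMeasure E) := by
    refine integrable_comp_log_norm_mul (C := C) hUm hθ.continuous hθc
      (hv.continuousOn_source.mul hΦ.contDiffOn.continuousOn)
      (fun x hx => mul_nonneg (hv.source_nonneg x hx) (hΦ.pos x hx).le) fun x hx => ?_
    exact (mul_le_of_le_one_right (hv.source_nonneg x hx) (hΦ.le_one x hx)).trans (hC x hx)
  have hmean : IntegrableOn (fun x => radialOperator (2 - Module.finrank ℝ E - 2 * γ) θ (log ‖x‖) *
      (‖x‖ ^ (-γ) * v x * Φ x)) U (logMeasure E) := by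
    refine integrable_comp_log_norm_mul hUm (continuous_radialOperator _ hθ)
      (hasCompactSupport_radialOperator _ hθc)
      ((hv.continuousOn_rpow_neg_mul hΦ.zero_notMem).mul hΦ.contDiffOn.continuousOn)
      (fun x hx => mul_nonneg (hv.rpow_neg_mul_pos hx (hΦ.ne_zero hx)).le (hΦ.pos x hx).le)
      fun x hx => mul_le_one₀ (hv.rpow_neg_mul_le_one hx (hΦ.ne_zero hx)) (hΦ.pos x hx).le
        (hΦ.le_one x hx)
  rw [← integral_add hsource hmean]
  have hlim : Tendsto (fun ε : ℝ => 3 * ε * ∫ x in U, (θ (log ‖x‖) * C +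
      |radialOperator (2 - Module.finrank ℝ E - 2 * γ) θ (log ‖x‖)| + |lam| * θ (log ‖x‖))
        ∂(logMeasure E)) (𝓝[>] 0) (𝓝 0) := by
    refine (Continuous.tendsto' ?_ 0 0 (by simp)).mono_left nhdsWithin_le_nhds
    fun_prop
  refine ge_of_tendsto hlim ?_
  filter_upwards [self_mem_nhdsWithin] with ε hε
  exact setIntegral_le_mul_setIntegral hΦ hv hγ hθ hθ₀ hθs ha hC hε rfl (hsource.add hmean)

section AngularMean

variable {E : Type*} [NormedAddCommGroup E] [InnerProductSpace ℝ E] [FiniteDimensional ℝ E]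
  [MeasurableSpace E] [BorelSpace E] {U : Set E} {ρ lam μ γ κ q C t : ℝ} {Φ v g f : E → ℝ}
  {k : ℝ → ℝ}

/-- The sliding mean of `f` in the variable `log ‖x‖`, projected onto the angular profile `Φ`. -/
def angularMean (U : Set E) (Φ : E → ℝ) (k : ℝ → ℝ) (f : E → ℝ) : ℝ → ℝ :=
  slidingMean ((logMeasure E).restrict U) (fun x => log ‖x‖) k fun x => f x * Φ x

theorem tsupport_unitBump_comp_const_sub_subset (t : ℝ) :
    tsupport (fun s => unitBump (t - s)) ⊆ Icc (t - 1) (t + 1) := by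
  refine closure_minimal (fun s hs => ?_) isClosed_Icc
  have h := abs_lt.1 (unitBump_pos_iff.1 (lt_of_le_of_ne unitBump.nonneg (Ne.symm hs)))
  exact ⟨by linarith [h.2], by linarith [h.1]⟩

theorem radialOperator_comp_const_sub (κ : ℝ) (k : ℝ → ℝ) (t s : ℝ) :
    radialOperator κ (fun s => k (t - s)) s =
      deriv (deriv k) (t - s) - κ * deriv k (t - s) := by
  have h : deriv (fun s => k (t - s)) = fun s => -deriv k (t - s) :=
    funext fun s => deriv_comp_const_sub k t s
  rw [radialOperator, h, deriv.fun_neg, deriv_comp_const_sub]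
  ring

namespace IsAngularEigenfunction

theorem integrable_angularMean (hΦ : IsAngularEigenfunction U ρ lam Φ) (hk : Continuous k)
    (hks : HasCompactSupport k) (hf : ContinuousOn f U) (hf₀ : ∀ x ∈ U, 0 ≤ f x)
    (hfC : ∀ x ∈ U, f x ≤ C) (t : ℝ) :
    IntegrableOn (fun x => k (t - log ‖x‖) * (f x * Φ x)) U (logMeasure E) :=
  integrable_comp_log_norm_mul (k := fun s => k (t - s)) hΦ.isOpen.measurableSet (by fun_prop)
    (hasCompactSupport_comp_const_sub hks t) (hf.mul hΦ.contDiffOn.continuousOn)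
    (fun x hx => mul_nonneg (hf₀ x hx) (hΦ.pos x hx).le)
    fun x hx => (mul_le_of_le_one_right (hf₀ x hx) (hΦ.le_one x hx)).trans (hfC x hx)

theorem hasDerivAt_angularMean (hΦ : IsAngularEigenfunction U ρ lam Φ) (hk : ContDiff ℝ 1 k)
    (hks : HasCompactSupport k) (hf : ContinuousOn f U) (hf₀ : ∀ x ∈ U, 0 ≤ f x)
    (hfC : ∀ x ∈ U, f x ≤ C) (t : ℝ) :
    HasDerivAt (angularMean U Φ k f) (angularMean U Φ (deriv k) f t) t := by
  have hUm := hΦ.isOpen.measurableSet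
  refine hasDerivAt_slidingMean (g := fun x => f x * Φ x) (C := C) measurable_norm.log hk hks
    ((hf.mul hΦ.contDiffOn.continuousOn).aestronglyMeasurable hUm) ?_ t
  filter_upwards [ae_restrict_mem hUm] with x hx
  rw [norm_of_nonneg (mul_nonneg (hf₀ x hx) (hΦ.pos x hx).le)]
  exact (mul_le_of_le_one_right (hf₀ x hx) (hΦ.le_one x hx)).trans (hfC x hx)

theorem angularMean_unitBump_nonneg (hΦ : IsAngularEigenfunction U ρ lam Φ)
    (hf₀ : ∀ x ∈ U, 0 ≤ f x) (t : ℝ) : 0 ≤ angularMean U Φ unitBump f t :=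
  setIntegral_nonneg hΦ.isOpen.measurableSet fun x hx =>
    mul_nonneg unitBump.nonneg (mul_nonneg (hf₀ x hx) (hΦ.pos x hx).le)

theorem angularMean_unitBump_pos (hΦ : IsAngularEigenfunction U ρ lam Φ)
    (hf : ContinuousOn f U) (hf₀ : ∀ x ∈ U, 0 < f x) (hfC : ∀ x ∈ U, f x ≤ C) (ht : log ρ < t) :
    0 < angularMean U Φ unitBump f t := by
  have hUm := hΦ.isOpen.measurableSet
  have hint := integrableOn_logMeasure_iff.1 (hΦ.integrable_angularMean unitBump.continuous
    unitBump.hasCompactSupport hf (fun x hx => (hf₀ x hx).le) hfC t)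
  obtain ⟨x₀, hx₀, hlog⟩ := hΦ.exists_log_norm_eq t ht
  rw [angularMean, slidingMean, setIntegral_logMeasure hUm,
    setIntegral_pos_iff_support_of_nonneg_ae ?_ hint]
  · refine Measure.measure_pos_of_mem_nhds volume (x := x₀) ?_
    have hnear : ∀ᶠ x in 𝓝 x₀, |t - log ‖x‖| < 1 := by
      have hcont : ContinuousAt (fun x : E => |t - log ‖x‖|) x₀ :=
        ((contDiffAt_log_norm (n := 0) (hΦ.ne_zero hx₀)).continuousAt.const_sub t).abs
      exact hcont.eventually_lt continuousAt_const (by simp [hlog])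
    filter_upwards [hnear, hΦ.isOpen.mem_nhds hx₀] with x hx hxU
    refine ⟨ne_of_gt (mul_pos ?_ (mul_pos (unitBump_pos_iff.2 hx)
      (mul_pos (hf₀ x hxU) (hΦ.pos x hxU)))), hxU⟩
    exact rpow_pos_of_pos (norm_pos_iff.2 (hΦ.ne_zero hxU)) _
  · filter_upwards [ae_restrict_mem hUm] with x hx
    exact mul_nonneg (rpow_nonneg (norm_nonneg x) _)
      (mul_nonneg unitBump.nonneg (mul_pos (hf₀ x hx) (hΦ.pos x hx)).le)

theorem angularMean_unitBump_le (hΦ : IsAngularEigenfunction U ρ lam Φ)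
    (hf : ContinuousOn f U) (hf₀ : ∀ x ∈ U, 0 ≤ f x) (hf₁ : ∀ x ∈ U, f x ≤ 1) (t : ℝ) :
    angularMean U Φ unitBump f t ≤ ∫ x in U, unitBump (t - log ‖x‖) ∂(logMeasure E) := by
  refine setIntegral_mono_on (hΦ.integrable_angularMean unitBump.continuous
    unitBump.hasCompactSupport hf hf₀ hf₁ t) ?_ hΦ.isOpen.measurableSet fun x hx => ?_
  · exact integrable_comp_of_hasCompactSupport (k := fun s => unitBump (t - s))
      measurable_norm.log (unitBump.continuous.comp (by fun_prop))
      (hasCompactSupport_comp_const_sub unitBump.hasCompactSupport t)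
  · exact mul_le_of_le_one_right unitBump.nonneg
      (mul_le_one₀ (hf₁ x hx) (hΦ.pos x hx).le (hΦ.le_one x hx))

theorem mul_angularMean_unitBump_le {D : ℝ} (hΦ : IsAngularEigenfunction U ρ lam Φ)
    (hf : ContinuousOn f U) (hf₀ : ∀ x ∈ U, 0 ≤ f x) (hfC : ∀ x ∈ U, f x ≤ C)
    (hg : ContinuousOn g U) (hg₀ : ∀ x ∈ U, 0 ≤ g x) (hgD : ∀ x ∈ U, g x ≤ D) (c : ℝ)
    (hfg : ∀ x ∈ U, |t - log ‖x‖| < 1 → c * f x ≤ g x) :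
    c * angularMean U Φ unitBump f t ≤ angularMean U Φ unitBump g t := by
  have hsupp := unitBump.hasCompactSupport
  rw [angularMean, slidingMean, ← integral_const_mul]
  refine setIntegral_mono_on
    ((hΦ.integrable_angularMean unitBump.continuous hsupp hf hf₀ hfC t).const_mul c)
    (hΦ.integrable_angularMean unitBump.continuous hsupp hg hg₀ hgD t)
    hΦ.isOpen.measurableSet fun x hx => ?_
  rcases (unitBump.nonneg : 0 ≤ unitBump (t - log ‖x‖)).eq_or_lt with hzero | hpos
  · simp [← hzero]
  · calc c * (unitBump (t - log ‖x‖) * (f x * Φ x))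
        = unitBump (t - log ‖x‖) * (c * f x * Φ x) := by ring
      _ ≤ unitBump (t - log ‖x‖) * (g x * Φ x) := mul_le_mul_of_nonneg_left
          (mul_le_mul_of_nonneg_right (hfg x hx (unitBump_pos_iff.1 hpos)) (hΦ.pos x hx).le)
          hpos.le

/-- The projection onto `Φ` turns the supersolution inequality into an ordinary differential
inequality in `t = log ‖x‖`. -/
theorem angularMean_deriv_deriv_le (hΦ : IsAngularEigenfunction U ρ lam Φ)
    (hv : IsScaledSupersolution U μ γ v g) (hγ : γ * (γ + Module.finrank ℝ E - 2) = lam - μ)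
    (ht : log ρ + 1 < t) :
    angularMean U Φ (deriv (deriv unitBump)) (fun x => ‖x‖ ^ (-γ) * v x) t ≤
      (2 - Module.finrank ℝ E - 2 * γ) *
        angularMean U Φ (deriv unitBump) (fun x => ‖x‖ ^ (-γ) * v x) t -
      angularMean U Φ unitBump g t := by
  obtain ⟨κ, hκ⟩ : ∃ κ : ℝ, κ = 2 - Module.finrank ℝ E - 2 * γ := ⟨_, rfl⟩
  have hint {k : ℝ → ℝ} (hk : Continuous k) (hks : HasCompactSupport k) :=
    hΦ.integrable_angularMean hk hks (hv.continuousOn_rpow_neg_mul hΦ.zero_notMem)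
      (fun x hx => (hv.rpow_neg_mul_pos hx (hΦ.ne_zero hx)).le)
      (fun x hx => hv.rpow_neg_mul_le_one hx (hΦ.ne_zero hx)) t
  have hbump : ContDiff ℝ 2 unitBump := contDiff_unitBump
  have hsupp := unitBump.hasCompactSupport
  have hsplit : ∫ x in U, radialOperator κ (fun s => unitBump (t - s)) (log ‖x‖) *
      (‖x‖ ^ (-γ) * v x * Φ x) ∂(logMeasure E) =
      angularMean U Φ (deriv (deriv unitBump)) (fun x => ‖x‖ ^ (-γ) * v x) t -
        κ * angularMean U Φ (deriv unitBump) (fun x => ‖x‖ ^ (-γ) * v x) t := by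
    rw [angularMean, angularMean, slidingMean, slidingMean, ← integral_const_mul,
      ← integral_sub (hint hbump.deriv'.continuous_deriv_one hsupp.deriv.deriv)
        ((hint (hbump.continuous_deriv one_le_two) hsupp.deriv).const_mul κ)]
    simp only [radialOperator_comp_const_sub, sub_mul, mul_assoc]
  have h := setIntegral_source_add_nonpos (θ := fun s => unitBump (t - s)) hΦ hv hγ
    (hbump.comp (contDiff_const.sub contDiff_id)) (fun _ => unitBump.nonneg)
    (tsupport_unitBump_comp_const_sub_subset t) (by linarith)
  rw [← hκ] at h ⊢
  rw [hsplit] at h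
  have hsource : angularMean U Φ unitBump g t =
    ∫ x in U, unitBump (t - log ‖x‖) * (g x * Φ x) ∂(logMeasure E) := rfl
  linarith

theorem hasDerivAt_angularMean_rpow_neg_mul (hΦ : IsAngularEigenfunction U ρ lam Φ)
    (hv : IsScaledSupersolution U μ γ v g) (hk : ContDiff ℝ 1 k) (hks : HasCompactSupport k)
    (t : ℝ) : HasDerivAt (angularMean U Φ k fun x => ‖x‖ ^ (-γ) * v x)
      (angularMean U Φ (deriv k) (fun x => ‖x‖ ^ (-γ) * v x) t) t :=
  hΦ.hasDerivAt_angularMean hk hks (hv.continuousOn_rpow_neg_mul hΦ.zero_notMem)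
    (fun _ hx => (hv.rpow_neg_mul_pos hx (hΦ.ne_zero hx)).le)
    (fun _ hx => hv.rpow_neg_mul_le_one hx (hΦ.ne_zero hx)) t

theorem exists_le_angularMean (hΦ : IsAngularEigenfunction U ρ lam Φ)
    (hv : IsScaledSupersolution U μ γ v g) (hγ : γ * (γ + Module.finrank ℝ E - 2) = lam - μ)
    (hκ : 0 ≤ 2 - Module.finrank ℝ E - 2 * γ) :
    ∃ c > 0, ∀ t, log ρ + 2 ≤ t →
      c ≤ angularMean U Φ unitBump (fun x => ‖x‖ ^ (-γ) * v x) t := by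
  have hbump : ContDiff ℝ 2 unitBump := contDiff_unitBump
  have hsupp := unitBump.hasCompactSupport
  have hm := hΦ.hasDerivAt_angularMean_rpow_neg_mul hv (hbump.of_le one_le_two) hsupp
  have hm' := hΦ.hasDerivAt_angularMean_rpow_neg_mul hv hbump.deriv' hsupp.deriv
  have hX₀ (x) (hx : x ∈ U) := hv.rpow_neg_mul_pos hx (hΦ.ne_zero hx)
  have hm'₀ (t) (ht : log ρ + 1 < t) :
      0 ≤ angularMean U Φ (deriv unitBump) (fun x => ‖x‖ ^ (-γ) * v x) t := by
    refine nonneg_of_hasDerivAt_le_mul hκ (fun t _ => hm t) (fun t _ => hm' t)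
      (fun t _ => hΦ.angularMean_unitBump_nonneg (fun x hx => (hX₀ x hx).le) t) (fun t ht => ?_) ht
    exact (hΦ.angularMean_deriv_deriv_le hv hγ ht).trans
      (sub_le_self _ (hΦ.angularMean_unitBump_nonneg hv.source_nonneg t))
  have hmono : MonotoneOn (angularMean U Φ unitBump fun x => ‖x‖ ^ (-γ) * v x)
      (Ici (log ρ + 2)) := by
    refine monotoneOn_of_deriv_nonneg (convex_Ici _)
      (fun t _ => (hm t).continuousAt.continuousWithinAt)
      (fun t _ => (hm t).differentiableAt.differentiableWithinAt) fun t ht => ?_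
    rw [interior_Ici, mem_Ioi] at ht
    exact (hm t).deriv ▸ hm'₀ t (by linarith)
  exact ⟨_, hΦ.angularMean_unitBump_pos (hv.continuousOn_rpow_neg_mul hΦ.zero_notMem) hX₀
    (fun x hx => hv.rpow_neg_mul_le_one hx (hΦ.ne_zero hx)) (by linarith),
    fun t ht => hmono self_mem_Ici ht ht⟩

theorem exists_le_angularMean_rpow (hΦ : IsAngularEigenfunction U ρ lam Φ)
    (hv : IsScaledSupersolution U μ γ v g) (hγ : γ * (γ + Module.finrank ℝ E - 2) = lam - μ)
    (hκ : 0 ≤ 2 - Module.finrank ℝ E - 2 * γ) (hq : 0 ≤ q) :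
    ∃ d > 0, ∀ t, log ρ + 2 ≤ t →
      d ≤ angularMean U Φ unitBump (fun x => (‖x‖ ^ (-γ) * v x) ^ q) t := by
  obtain ⟨c, hc, hcm⟩ := hΦ.exists_le_angularMean hv hγ hκ
  obtain ⟨B, hB, hBt⟩ := exists_integral_unitBump_le U
  have hUm := hΦ.isOpen.measurableSet
  refine ⟨(c / (2 * B)) ^ q * (c / 2), by positivity, fun t ht => ?_⟩
  have hP := hΦ.integrable_angularMean (f := fun _ => 1) unitBump.continuous
    unitBump.hasCompactSupport continuousOn_const (fun _ _ => zero_le_one) (fun _ _ => le_rfl) t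
  have hP₁ := (hΦ.angularMean_unitBump_le (f := fun _ => 1) continuousOn_const
    (fun _ _ => zero_le_one) (fun _ _ => le_rfl) t).trans (hBt t)
  have h := le_integral_mul_rpow (ν := (logMeasure E).restrict U)
    (Y := fun x => ‖x‖ ^ (-γ) * v x) hP
    ((ae_restrict_iff' hUm).2 (.of_forall fun x hx =>
      mul_nonneg unitBump.nonneg (mul_nonneg zero_le_one (hΦ.pos x hx).le))) hB hP₁
    ((hv.continuousOn_rpow_neg_mul hΦ.zero_notMem).aestronglyMeasurable hUm)
    ((ae_restrict_iff' hUm).2 (.of_forall fun x hx => (hv.rpow_neg_mul_pos hx (hΦ.ne_zero hx)).le))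
    ((ae_restrict_iff' hUm).2 (.of_forall fun x hx => hv.rpow_neg_mul_le_one hx (hΦ.ne_zero hx)))
    hq hc.le ((hcm t ht).trans_eq ?_)
  · refine h.trans_eq ?_
    simp only [angularMean, slidingMean, one_mul, mul_assoc, mul_comm (Φ _)]
  · simp only [angularMean, slidingMean, one_mul, mul_assoc, mul_comm (Φ _)]

theorem false_of_rpow_le_source (hΦ : IsAngularEigenfunction U ρ lam Φ)
    (hv : IsScaledSupersolution U μ γ v g) (hγ : γ * (γ + Module.finrank ℝ E - 2) = lam - μ)
    (hκ : 0 ≤ 2 - Module.finrank ℝ E - 2 * γ) (hq : 0 ≤ q) {c T : ℝ} (hc : 0 < c)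
    (hg : ∀ x ∈ U, T ≤ log ‖x‖ → c * (‖x‖ ^ (-γ) * v x) ^ q ≤ g x) : False := by
  obtain ⟨d, hd, hdm⟩ := hΦ.exists_le_angularMean_rpow hv hγ hκ hq
  obtain ⟨B, -, hB⟩ := exists_integral_unitBump_le U
  obtain ⟨C, hC⟩ := hv.exists_source_le
  have hbump : ContDiff ℝ 2 unitBump := contDiff_unitBump
  have hsupp := unitBump.hasCompactSupport
  have hXc := hv.continuousOn_rpow_neg_mul hΦ.zero_notMem
  have hX₀ (x) (hx : x ∈ U) := hv.rpow_neg_mul_pos hx (hΦ.ne_zero hx)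
  have hX₁ (x) (hx : x ∈ U) := hv.rpow_neg_mul_le_one hx (hΦ.ne_zero hx)
  have hsource (t) (ht : max (log ρ + 2) (T + 1) < t) : c * d ≤ angularMean U Φ unitBump g t := by
    obtain ⟨htρ, htT⟩ := max_lt_iff.1 ht
    refine (mul_le_mul_of_nonneg_left (hdm t htρ.le) hc.le).trans
      (hΦ.mul_angularMean_unitBump_le (hXc.rpow_const fun _ _ => Or.inr hq)
        (fun x hx => rpow_nonneg (hX₀ x hx).le q)
        (fun x hx => rpow_le_one (hX₀ x hx).le (hX₁ x hx) hq) hv.continuousOn_source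
        hv.source_nonneg hC c fun x hx hxt => hg x hx ?_)
    linarith [(abs_lt.1 hxt).2]
  exact false_of_hasDerivAt_le_mul_sub hκ (mul_pos hc hd)
    (fun t _ => hΦ.hasDerivAt_angularMean_rpow_neg_mul hv (hbump.of_le one_le_two) hsupp t)
    (fun t _ => hΦ.hasDerivAt_angularMean_rpow_neg_mul hv hbump.deriv' hsupp.deriv t)
    (fun t _ => hΦ.angularMean_unitBump_nonneg (fun x hx => (hX₀ x hx).le) t)
    (fun t _ => (hΦ.angularMean_unitBump_le hXc (fun x hx => (hX₀ x hx).le) hX₁ t).trans (hB t))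
    fun t ht => (hΦ.angularMean_deriv_deriv_le hv hγ
      (by linarith [(max_lt_iff.1 ht).1])).trans (sub_le_sub_left (hsource t ht) _)

end IsAngularEigenfunction

end AngularMean

section RieszSupersolution

theorem rpow_mul_rpow_neg_mul_rpow_le {r s a b γ q : ℝ} (hr : 1 ≤ r) (hs : 0 ≤ s)
    (hab : a ≤ b + γ * q) : r ^ a * (r ^ (-γ) * s) ^ q ≤ r ^ b * s ^ q := by
  have hpos : 0 < r := one_pos.trans_le hr
  rw [mul_rpow (rpow_nonneg hpos.le _) hs, ← rpow_mul hpos.le, ← mul_assoc, ← rpow_add hpos]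
  gcongr
  linarith

variable {E : Type*} [NormedAddCommGroup E] [InnerProductSpace ℝ E] [FiniteDimensional ℝ E]
  {U : Set E} {ρ lam μ γ α p q c T : ℝ} {Φ u v g f : E → ℝ}

theorem IsScaledSupersolution.cutoff (hv : IsScaledSupersolution U μ γ v 0) (hU : 0 ∉ U)
    (hq : 0 ≤ q) (hc : 0 ≤ c) (hT : ∀ x ∈ U, T < log ‖x‖ →
      ‖x‖ ^ (γ - 2) * (c * (‖x‖ ^ (-γ) * v x) ^ q) ≤ -Δ v x - μ * (‖x‖ ^ 2)⁻¹ * v x) :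
    IsScaledSupersolution U μ γ v
      fun x => c * (‖x‖ ^ (-γ) * v x) ^ q * max 0 (min 1 (log ‖x‖ - T)) := by
  have hne (x) (hx : x ∈ U) : x ≠ 0 := ne_of_mem_of_not_mem hx hU
  have hX₀ (x) (hx : x ∈ U) : 0 ≤ c * (‖x‖ ^ (-γ) * v x) ^ q :=
    mul_nonneg hc (rpow_nonneg (hv.rpow_neg_mul_pos hx (hne x hx)).le q)
  have hX₁ (x) (hx : x ∈ U) : c * (‖x‖ ^ (-γ) * v x) ^ q ≤ c :=
    mul_le_of_le_one_right hc (rpow_le_one (hv.rpow_neg_mul_pos hx (hne x hx)).le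
      (hv.rpow_neg_mul_le_one hx (hne x hx)) hq)
  have hχ₁ (s : ℝ) : max 0 (min 1 s) ≤ 1 := max_le zero_le_one (min_le_left 1 s)
  refine ⟨hv.contDiffOn, hv.pos, hv.le_rpow, ?_,
    fun x hx => mul_nonneg (hX₀ x hx) (le_max_left _ _),
    ⟨c, fun x hx => (mul_le_of_le_one_right (hX₀ x hx) (hχ₁ _)).trans (hX₁ x hx)⟩, fun x hx => ?_⟩
  · have hlog : ContinuousOn (fun x : E => log ‖x‖) U :=
      continuousOn_id.norm.log fun x hx => norm_ne_zero_iff.2 (hne x hx)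
    exact (((hv.continuousOn_rpow_neg_mul hU).rpow_const fun _ _ => Or.inr hq).const_mul c).mul
      (continuousOn_const.sup (continuousOn_const.inf (hlog.sub continuousOn_const)))
  · rcases le_or_gt (log ‖x‖) T with hle | hlt
    · rw [max_eq_left ((min_le_right _ _).trans (sub_nonpos.2 hle)), mul_zero]
      exact hv.le_neg_laplacian x hx
    · exact (mul_le_mul_of_nonneg_left (mul_le_of_le_one_right (hX₀ x hx) (hχ₁ _))
        (rpow_nonneg (norm_nonneg x) _)).trans (hT x hx hlt)

theorem IsAngularEigenfunction.exists_isScaledSupersolution {A : E → ℝ}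
    (hΦ : IsAngularEigenfunction U ρ lam Φ)
    (hγ : γ * (γ + Module.finrank ℝ E - 2) = lam - μ) (hq : 1 < q) (hu : ContDiffOn ℝ 2 u U)
    (hu₀ : ∀ x ∈ U, 0 < u x) (hA : ∀ x ∈ U, 0 ≤ A x)
    (huL : ∀ x ∈ U, A x * u x ^ q ≤ -Δ u x - μ * (‖x‖ ^ 2)⁻¹ * u x) :
    ∃ v, IsScaledSupersolution U μ γ v 0 ∧ (∀ x ∈ U, v x ≤ u x) ∧
      ∀ x ∈ U, min 1 (q - 1) * (A x * v x ^ q) ≤ -Δ v x - μ * (‖x‖ ^ 2)⁻¹ * v x := by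
  have hw : ContDiffOn ℝ 2 (fun x => ‖x‖ ^ γ * Φ x) U := fun x hx =>
    (((contDiffAt_norm ℝ (hΦ.ne_zero hx)).rpow_const_of_ne
      (norm_ne_zero_iff.2 (hΦ.ne_zero hx))).mul (hΦ.contDiffAt hx)).contDiffWithinAt
  obtain ⟨v, hv, hv₀, hvw, hvu, hvL⟩ := exists_bounded_supersolution hΦ.isOpen hq hu hw hu₀
    (fun x hx => mul_pos (rpow_pos_of_pos (norm_pos_iff.2 (hΦ.ne_zero hx)) γ) (hΦ.pos x hx))
    hA (fun x hx => (hΦ.neg_laplacian_norm_rpow_mul_sub hγ hx).ge) huL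
  have hδ : 0 ≤ min 1 (q - 1) := le_min zero_le_one (sub_nonneg.2 hq.le)
  refine ⟨v, ⟨hv, hv₀, fun x hx => (hvw x hx).trans ?_, continuousOn_const, fun _ _ => le_rfl,
    ⟨0, fun _ _ => le_rfl⟩, fun x hx => ?_⟩, hvu, hvL⟩
  · exact mul_le_of_le_one_right (rpow_nonneg (norm_nonneg x) γ) (hΦ.le_one x hx)
  · rw [Pi.zero_apply, mul_zero]
    exact (mul_nonneg hδ (mul_nonneg (hA x hx) (rpow_nonneg (hv₀ x hx).le q))).trans (hvL x hx)

variable [MeasurableSpace E] [BorelSpace E]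

namespace IsAngularEigenfunction

theorem false_of_rpow_le_neg_laplacian (hΦ : IsAngularEigenfunction U ρ lam Φ)
    (hv : IsScaledSupersolution U μ γ v 0) (hγ : γ * (γ + Module.finrank ℝ E - 2) = lam - μ)
    (hκ : 0 ≤ 2 - Module.finrank ℝ E - 2 * γ) (hq : 0 ≤ q) (hc : 0 < c)
    (hT : ∀ x ∈ U, T < log ‖x‖ →
      ‖x‖ ^ (γ - 2) * (c * (‖x‖ ^ (-γ) * v x) ^ q) ≤ -Δ v x - μ * (‖x‖ ^ 2)⁻¹ * v x) : False := by
  refine hΦ.false_of_rpow_le_source (hv.cutoff hΦ.zero_notMem hq hc.le hT) hγ hκ hq hc (T := T + 1)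
    fun x _ hx => ?_
  rw [min_eq_left (by linarith), max_eq_right zero_le_one, mul_one]

theorem exists_rpow_le_toReal_lintegral (hΦ : IsAngularEigenfunction U ρ lam Φ)
    (hv : IsScaledSupersolution U μ γ v g) (hγ : γ * (γ + Module.finrank ℝ E - 2) = lam - μ)
    (hκ : 0 ≤ 2 - Module.finrank ℝ E - 2 * γ) (hα : 0 ≤ α) (hp : 0 ≤ p)
    (hf : ∀ y ∈ U, v y ^ p ≤ f y)
    (hfin : ∀ x ∈ U, ∫⁻ y in U, ENNReal.ofReal (f y * ‖x - y‖ ^ (-α)) < ⊤) :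
    ∃ c > 0, ∀ x ∈ U, log ρ + 2 ≤ log ‖x‖ → c * ‖x‖ ^ (Module.finrank ℝ E - α + γ * p) ≤
      (∫⁻ y in U, ENNReal.ofReal (f y * ‖x - y‖ ^ (-α))).toReal := by
  obtain ⟨d, hd, hdm⟩ := hΦ.exists_le_angularMean_rpow hv hγ hκ hp
  refine ⟨4 ^ (-α) * exp (-|Module.finrank ℝ E + γ * p|) * d, by positivity, fun x hx hlog => ?_⟩
  have hX₀ (y) (hy : y ∈ U) := (hv.rpow_neg_mul_pos hy (hΦ.ne_zero hy)).le
  have hXp (y) (hy : y ∈ U) : ‖y‖ ^ (γ * p) * ((‖y‖ ^ (-γ) * v y) ^ p * Φ y) ≤ f y := by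
    have hpos := norm_pos_iff.2 (hΦ.ne_zero hy)
    calc ‖y‖ ^ (γ * p) * ((‖y‖ ^ (-γ) * v y) ^ p * Φ y)
        ≤ ‖y‖ ^ (γ * p) * (‖y‖ ^ (-γ) * v y) ^ p := by
          gcongr
          exact mul_le_of_le_one_right (rpow_nonneg (hX₀ y hy) p) (hΦ.le_one y hy)
      _ = v y ^ p := by
          rw [rpow_mul hpos.le, ← mul_rpow (by positivity) (hX₀ y hy), ← mul_assoc, ← rpow_add hpos,
            add_neg_cancel, rpow_zero, one_mul]
      _ ≤ f y := hf y hy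
  have hint := hΦ.integrable_angularMean unitBump.continuous unitBump.hasCompactSupport
    ((hv.continuousOn_rpow_neg_mul hΦ.zero_notMem).rpow_const fun _ _ => Or.inr hp)
    (fun y hy => rpow_nonneg (hX₀ y hy) p)
    (fun y hy => rpow_le_one (hX₀ y hy) (hv.rpow_neg_mul_le_one hy (hΦ.ne_zero hy)) hp) (log ‖x‖)
  have hriesz := ofReal_mul_slidingMean_le_lintegral hα hΦ.isOpen.measurableSet (hΦ.ne_zero hx)
    (fun y hy => mul_nonneg (rpow_nonneg (hX₀ y hy) p) (hΦ.pos y hy).le) hint hXp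
  refine le_trans ?_ ((ENNReal.ofReal_le_iff_le_toReal (hfin x hx).ne).1 hriesz)
  rw [mul_right_comm]
  exact mul_le_mul_of_nonneg_left (hdm _ hlog) (by positivity)

/-- The exponent condition says that, on the scale `u ~ ‖x‖^γ`, the nonlinear term dominates
`‖x‖⁻² u`. -/
theorem false_of_toReal_lintegral_mul_rpow_le (hΦ : IsAngularEigenfunction U ρ lam Φ)
    (hγ : γ * (γ + Module.finrank ℝ E - 2) = lam - μ)
    (hκ : 0 ≤ 2 - Module.finrank ℝ E - 2 * γ) (hα : 0 ≤ α) (hp : 0 ≤ p) (hq : 1 < q)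
    (hexp : γ - 2 ≤ Module.finrank ℝ E - α + γ * p + γ * q) (hu : ContDiffOn ℝ 2 u U)
    (hu₀ : ∀ x ∈ U, 0 < u x)
    (hfin : ∀ x ∈ U, ∫⁻ y in U, ENNReal.ofReal (u y ^ p * ‖x - y‖ ^ (-α)) < ⊤)
    (hineq : ∀ x ∈ U, (∫⁻ y in U, ENNReal.ofReal (u y ^ p * ‖x - y‖ ^ (-α))).toReal * u x ^ q ≤
      -Δ u x - μ * (‖x‖ ^ 2)⁻¹ * u x) : False := by
  obtain ⟨v, hv, hvu, hvL⟩ := hΦ.exists_isScaledSupersolution hγ hq hu hu₀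
    (fun _ _ => ENNReal.toReal_nonneg) hineq
  obtain ⟨c, hc, hcA⟩ := hΦ.exists_rpow_le_toReal_lintegral hv hγ hκ hα hp
    (fun y hy => rpow_le_rpow (hv.pos y hy).le (hvu y hy) hp) hfin
  have hδ : 0 < min 1 (q - 1) := lt_min one_pos (sub_pos.2 hq)
  refine hΦ.false_of_rpow_le_neg_laplacian (T := max (log ρ + 2) 0) hv hγ hκ
    (zero_le_one.trans hq.le) (mul_pos hδ hc) fun x hx hT => le_trans ?_ (hvL x hx)
  obtain ⟨hTρ, hT₀⟩ := max_lt_iff.1 hT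
  have hnorm : 1 ≤ ‖x‖ := ((log_pos_iff (norm_nonneg x)).1 hT₀).le
  have hv₀ := (hv.pos x hx).le
  calc ‖x‖ ^ (γ - 2) * (min 1 (q - 1) * c * (‖x‖ ^ (-γ) * v x) ^ q)
      = min 1 (q - 1) * (c * (‖x‖ ^ (γ - 2) * (‖x‖ ^ (-γ) * v x) ^ q)) := by ring
    _ ≤ min 1 (q - 1) * (c * (‖x‖ ^ (Module.finrank ℝ E - α + γ * p) * v x ^ q)) := by
        exact mul_le_mul_of_nonneg_left (mul_le_mul_of_nonneg_left
          (rpow_mul_rpow_neg_mul_rpow_le hnorm hv₀ hexp) hc.le) hδ.le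
    _ ≤ _ := by
        rw [← mul_assoc c]
        gcongr
        exact hcA x hx hTρ.le

end IsAngularEigenfunction

end RieszSupersolution

section Cone

variable {N : ℕ} {Ω : Set (Euc N)} {lam1 ρ μ : ℝ} {φ : Euc N → ℝ}

theorem lap_eq_laplacian (u : Euc N → ℝ) : lap N u = Δ u := by
  rw [laplacian_eq_iteratedFDeriv_orthonormalBasis u (EuclideanSpace.basisFun (Fin N) ℝ)]
  funext x
  simp only [lap, EuclideanSpace.basisFun_apply]

theorem ne_zero_of_mem_coneGT (hρ : 0 < ρ) {x : Euc N} (hx : x ∈ coneGT N ρ Ω) : x ≠ 0 :=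
  norm_pos_iff.1 (hρ.trans hx.1)

theorem coneGT_subset_cone (hρ : 0 < ρ) : coneGT N ρ Ω ⊆ cone N Ω :=
  fun _ hx => ⟨ne_zero_of_mem_coneGT hρ hx, hx.2⟩

theorem norm_exp_smul {ω : Euc N} (hω : ω ∈ Metric.sphere 0 1) (t : ℝ) : ‖exp t • ω‖ = exp t := by
  rw [norm_smul, mem_sphere_zero_iff_norm.1 hω, mul_one, norm_of_nonneg (exp_pos t).le]

theorem exp_smul_mem_coneGT (hsub : Ω ⊆ Metric.sphere 0 1) (hρ : 0 < ρ) {ω : Euc N} (hω : ω ∈ Ω)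
    {t : ℝ} (ht : log ρ < t) : exp t • ω ∈ coneGT N ρ Ω := by
  have hnorm := norm_exp_smul (hsub hω) t
  refine ⟨((log_lt_iff_lt_exp hρ).1 ht).trans_eq hnorm.symm, ?_⟩
  rwa [hnorm, inv_smul_smul₀ (exp_ne_zero t)]

theorem isOpen_coneGT (hΩ : IsOpen {ω : Metric.sphere (0 : Euc N) 1 | (ω : Euc N) ∈ Ω})
    (hρ : 0 < ρ) : IsOpen (coneGT N ρ Ω) := by
  obtain ⟨O, hO, hOΩ⟩ := isOpen_induced_iff.1 hΩ
  have hcont : ContinuousOn (fun x : Euc N => ‖x‖⁻¹ • x) {x | ρ < ‖x‖} :=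
    (continuousOn_id.norm.inv₀ fun x hx => (hρ.trans hx).ne').smul continuousOn_id
  have heq : coneGT N ρ Ω = {x : Euc N | ρ < ‖x‖} ∩ (fun x => ‖x‖⁻¹ • x) ⁻¹' O := by
    ext x
    refine and_congr_right fun hx => ?_
    have hsphere : ‖x‖⁻¹ • x ∈ Metric.sphere (0 : Euc N) 1 := by
      simp [norm_smul, (hρ.trans hx).ne']
    exact (Set.ext_iff.1 hOΩ ⟨_, hsphere⟩).symm
  exact heq ▸ hcont.isOpen_inter_preimage (isOpen_lt continuous_const continuous_norm) hO

theorem inner_gradient_comp_inv_norm_smul_eq_zero {E : Type*} [NormedAddCommGroup E]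
    [InnerProductSpace ℝ E] [CompleteSpace E] {f : E → ℝ} {x : E}
    (hf : DifferentiableAt ℝ (fun y => f (‖y‖⁻¹ • y)) x) :
    ⟪x, ∇ (fun y => f (‖y‖⁻¹ • y)) x⟫_ℝ = 0 := by
  have hconst : (fun t : ℝ => f (‖x + t • x‖⁻¹ • (x + t • x))) =ᶠ[𝓝 0]
      fun _ => f (‖x‖⁻¹ • x) := by
    filter_upwards [Ioi_mem_nhds (show (-1 : ℝ) < 0 by norm_num)] with t ht
    have hpos : 0 < 1 + t := by linarith [mem_Ioi.1 ht]
    rw [show x + t • x = (1 + t) • x by rw [add_smul, one_smul], norm_smul,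
      norm_of_nonneg hpos.le, mul_inv_rev, smul_smul, mul_assoc,
      inv_mul_cancel₀ hpos.ne', mul_one]
  rw [real_inner_comm, inner_gradient_left, ← hf.lineDeriv_eq_fderiv]
  exact hconst.deriv_eq.trans (deriv_const _ _)

theorem DirichletEigenpair.exists_isCompact (hphi : DirichletEigenpair N Ω lam1 φ)
    (hsub : Ω ⊆ Metric.sphere 0 1) (hρ : 0 < ρ) {ε a b : ℝ} (hε : 0 < ε) (ha : log ρ < a) :
    ∃ K, IsCompact K ∧ K ⊆ coneGT N ρ Ω ∧
      ∀ x ∈ coneGT N ρ Ω, ε ≤ φ (‖x‖⁻¹ • x) → log ‖x‖ ∈ Icc a b → x ∈ K := by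
  have hcompact : IsCompact (closure Ω ∩ φ ⁻¹' Ici ε) :=
    (isCompact_sphere (0 : Euc N) 1).of_isClosed_subset
      (hphi.contOn.preimage_isClosed_of_isClosed isClosed_closure isClosed_Ici)
      (inter_subset_left.trans (closure_minimal hsub Metric.isClosed_sphere))
  have hsubΩ : closure Ω ∩ φ ⁻¹' Ici ε ⊆ Ω := fun ω ⟨hω, hεω⟩ =>
    by_contra fun h => (hε.trans_le hεω).ne' (hphi.bdryZero ω ⟨hω, h⟩)
  refine ⟨(fun z : ℝ × Euc N => exp z.1 • z.2) '' (Icc a b ×ˢ (closure Ω ∩ φ ⁻¹' Ici ε)),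
    (isCompact_Icc.prod hcompact).image (by fun_prop), ?_, fun x hx hεx hlog => ?_⟩
  · rintro _ ⟨⟨s, ω⟩, ⟨hs, hω⟩, rfl⟩
    exact exp_smul_mem_coneGT hsub hρ (hsubΩ hω) (ha.trans_le hs.1)
  · have hpos : 0 < ‖x‖ := hρ.trans hx.1
    refine ⟨(log ‖x‖, ‖x‖⁻¹ • x), ⟨hlog, subset_closure hx.2, hεx⟩, ?_⟩
    simp only [exp_log hpos, smul_inv_smul₀ hpos.ne']

theorem DirichletEigenpair.isAngularEigenfunction (hphi : DirichletEigenpair N Ω lam1 φ)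
    (hsub : Ω ⊆ Metric.sphere 0 1) (hne : Ω.Nonempty)
    (hΩ : IsOpen {ω : Metric.sphere (0 : Euc N) 1 | (ω : Euc N) ∈ Ω}) (hρ : 0 < ρ) :
    IsAngularEigenfunction (coneGT N ρ Ω) ρ lam1 fun x => φ (‖x‖⁻¹ • x) := by
  have hopen := isOpen_coneGT hΩ hρ
  have hsmooth := hphi.smoothExt.mono (coneGT_subset_cone hρ)
  refine ⟨hopen, fun h => ne_zero_of_mem_coneGT hρ h rfl, fun t ht => ?_, hsmooth,
    fun x hx => hphi.pos _ hx.2, fun x hx => hphi.le_one _ (subset_closure hx.2), fun x hx => ?_,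
    fun x hx => ?_, fun ε hε a b ha => hphi.exists_isCompact hsub hρ hε ha⟩
  · obtain ⟨ω, hω⟩ := hne
    exact ⟨exp t • ω, exp_smul_mem_coneGT hsub hρ hω ht, by rw [norm_exp_smul (hsub hω), log_exp]⟩
  · exact inner_gradient_comp_inv_norm_smul_eq_zero
      ((hsmooth.contDiffAt (hopen.mem_nhds hx)).differentiableAt (by simp))
  · rw [← lap_eq_laplacian, hphi.eigen x (coneGT_subset_cone hρ hx), rpow_neg (norm_nonneg x),
      rpow_two]

theorem gammaStar_mul_add_sub (hμ : μ ≤ CHconst N lam1) :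
    gammaStar N lam1 μ * (gammaStar N lam1 μ + N - 2) = lam1 - μ := by
  rw [CHconst] at hμ
  have hsq := sq_sqrt (show 0 ≤ ((N : ℝ) - 2) ^ 2 + 4 * (lam1 - μ) by linarith)
  rw [gammaStar]
  linarith

theorem two_sub_sub_two_mul_gammaStar_nonneg : 0 ≤ 2 - (N : ℝ) - 2 * gammaStar N lam1 μ := by
  rw [gammaStar]
  linarith [sqrt_nonneg (((N : ℝ) - 2) ^ 2 + 4 * (lam1 - μ))]

end Cone

theorem no_solution_of_pq_critical_general
    (N : ℕ) (Ω : Set (Euc N)) (hsub : Ω ⊆ Metric.sphere (0 : Euc N) 1) (hne : Ω.Nonempty)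
    (hopen : IsOpen {ω : Metric.sphere (0 : Euc N) 1 | (ω : Euc N) ∈ Ω})
    (lam1 : ℝ) (φ : Euc N → ℝ) (hphi : DirichletEigenpair N Ω lam1 φ)
    (α p q ρ μ : ℝ) (hα : 0 ≤ α) (hp : 0 ≤ p) (hρ : 0 < ρ)
    (hμ : μ ≤ CHconst N lam1)
    (hcrit : (p + q - 1) * (-(gammaStar N lam1 μ)) ≤ (N : ℝ) - α + 2)
    (hq1 : 1 < q) :
    ¬ ∃ u : Euc N → ℝ, IsPosSolE N ρ μ α p q Ω u := by
  rintro ⟨u, hu, -, hpos, hfin, hineq⟩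
  refine (hphi.isAngularEigenfunction hsub hne hopen hρ).false_of_toReal_lintegral_mul_rpow_le
    (γ := gammaStar N lam1 μ) (μ := μ) ?_ ?_ hα hp hq1 ?_ hu hpos hfin fun x hx => ?_
  · rw [finrank_euclideanSpace_fin, gammaStar_mul_add_sub hμ]
  · rw [finrank_euclideanSpace_fin]
    exact two_sub_sub_two_mul_gammaStar_nonneg
  · rw [finrank_euclideanSpace_fin]
    linarith
  · rw [← lap_eq_laplacian, ← rpow_two, ← rpow_neg (norm_nonneg x)]
    exact hineq x hx

/-- if `μ ≤ C_{H,Ω}`, `(p+q-1)·|γ_*| = N - α + 2` and `q > 1` then `(E)` has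
no positive solution. -/
theorem no_solution_of_pq_critical
    (N : ℕ) (hN : 2 ≤ N) (Ω : Set (Euc N)) (hΩ : IsConeDomain N Ω)
    (lam1 : ℝ) (φ : Euc N → ℝ) (hphi : DirichletEigenpair N Ω lam1 φ)
    (α p q ρ μ : ℝ) (hα : 0 ≤ α) (hαN : α < N) (hp : 0 < p) (hq : 0 < q) (hρ : 0 < ρ)
    (hμ : μ ≤ CHconst N lam1)
    (hcrit : (p + q - 1) * (-(gammaStar N lam1 μ)) = (N : ℝ) - α + 2)
    (hq1 : 1 < q) :
    ¬ ∃ u : Euc N → ℝ, IsPosSolE N ρ μ α p q Ω u :=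
  no_solution_of_pq_critical_general N Ω hΩ.1 hΩ.2.1.nonempty hΩ.2.2 lam1 φ hphi α p q ρ μ hα hp.le
    hρ hμ hcrit.le hq1
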